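/- arXiv:1203.6495 — 6 statements merged into one kernel-verified Lean document; each statement's English description precedes it below -/
import Mathlib

section
/- Let V be a 6-dimensional complex vector space, A ⊆ ⋀³V a Lagrangian subspace, W ∈ Θ_A, and 0 ≠ v₀ ∈ W. Suppose V₀ is a 5-dimensional subspace with V = ℂv₀ ⊕ V₀ and A ∩ ⋀³V₀ = 0. Set W₀ = W ∩ V₀ (a 2-dimensional space) and choose a subspace U₀ ⊆ V₀ with V₀ = W₀ ⊕ U₀. Then the map α ↦ v₀∧α + q̃_A(α) restricts to a linear isomorphism from the radical of q_A restricted to W₀∧U₀ (i.e. {α ∈ W₀∧U₀ : q_A(α,β) = 0 for all β ∈ W₀∧U₀}) onto A ∩ (⋀²W∧U₀); consequently the dimension of this radical equals dim_ℂ(A ∩ (⋀²W∧V)) − 1. -/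
/-!
Put `W₀ = W ∩ V₀`, so that `W = ℂv₀ ⊕ W₀` and `⋀²W ∧ U₀ = v₀ ∧ W₀ ∧ U₀ + ⋀²W₀ ∧ U₀`
(`wedge2U_decomp`). Because `A ∩ ⋀³V₀ = 0`, an element `v₀ ∧ α + γ` of `A` with `α ∈ ⋀²V₀` and
`γ ∈ ⋀³V₀` has `γ = q̃(α)`; because `A` is isotropic and `⋀⁶V₀ = 0`, the form `q_A` is symmetric.

An element `v₀ ∧ α + γ` of `A ∩ (⋀²W ∧ U₀)` thus has `q̃(α) = γ ∈ ⋀²W₀ ∧ U₀`, and `α` lies in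
the radical since `⋀³W₀ = 0` (`mixedWedge_mul_wedge2U`). Conversely, let `α` be in the radical.
Since `v₀ ∧ ⋀²W₀ ⊆ ⋀³W ⊆ A`, the map `q̃` vanishes on `⋀²W₀`, so `q̃(α)` pairs to zero with
`W₀ ∧ U₀ + ⋀²W₀ = W₀ ∧ V₀`. Nondegeneracy of `V × ⋀⁵V → ℂ` (`eq_zero_of_vol`) gives
`w ∧ q̃(α) = 0` for every `w ∈ W₀`. Dividing by a basis `e, f` of `W₀` (`exists_factor`),
`q̃(α) = e ∧ f ∧ c` with `c ∈ V₀`, hence `q̃(α) ∈ ⋀²W₀ ∧ U₀`.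

For the dimension, `⋀²W ∧ V = ⋀³W ⊕ ⋀²W ∧ U₀` with `⋀³W ⊆ A` a line, and the modular law applies.

Divisibility and independence in the exterior algebra are handled throughout by contraction with
linear functionals (`ctr`).
-/

open Module ExteriorAlgebra

noncomputable section

variable {V : Type*} [AddCommGroup V] [Module ℂ V]

/-- The subspace `v ∧ ⋀²V` of `⋀³V`, inside the exterior algebra. -/
def vWedge2 (v : V) : Submodule ℂ (ExteriorAlgebra ℂ V) :=
  Submodule.map (LinearMap.mulLeft ℂ (ι ℂ v)) (⋀[ℂ]^2 V)

/-- The image of `⋀²W` in the exterior algebra, for a subspace `W ⊆ V`. -/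
def wedge2 (W : Submodule ℂ V) : Submodule ℂ (ExteriorAlgebra ℂ V) :=
  Submodule.span ℂ {z | ∃ w₁ ∈ W, ∃ w₂ ∈ W, z = ι ℂ w₁ * ι ℂ w₂}

/-- The image of `⋀³W` in the exterior algebra, for a subspace `W ⊆ V`. -/
def wedge3 (W : Submodule ℂ V) : Submodule ℂ (ExteriorAlgebra ℂ V) :=
  Submodule.span ℂ
    {z | ∃ w₁ ∈ W, ∃ w₂ ∈ W, ∃ w₃ ∈ W, z = ι ℂ w₁ * ι ℂ w₂ * ι ℂ w₃}

/-- The subspace `⋀²W ∧ V` for a subspace `W ⊆ V`, inside the exterior algebra. -/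
def wedge2V (W : Submodule ℂ V) : Submodule ℂ (ExteriorAlgebra ℂ V) :=
  Submodule.span ℂ
    {z | ∃ w₁ ∈ W, ∃ w₂ ∈ W, ∃ u : V, z = ι ℂ w₁ * ι ℂ w₂ * ι ℂ u}

/-- The subspace `⋀²W ∧ U₀` for subspaces `W, U₀ ⊆ V`, inside the exterior algebra. -/
def wedge2U (W U₀ : Submodule ℂ V) : Submodule ℂ (ExteriorAlgebra ℂ V) :=
  Submodule.span ℂ
    {z | ∃ w₁ ∈ W, ∃ w₂ ∈ W, ∃ u ∈ U₀, z = ι ℂ w₁ * ι ℂ w₂ * ι ℂ u}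

/-- The subspace `W₀ ∧ U₀` (span of `w∧u`, `w ∈ W₀`, `u ∈ U₀`) inside the exterior algebra. -/
def mixedWedge (W₀ U₀ : Submodule ℂ V) : Submodule ℂ (ExteriorAlgebra ℂ V) :=
  Submodule.span ℂ {z | ∃ w ∈ W₀, ∃ u ∈ U₀, z = ι ℂ w * ι ℂ u}

/-- The radical of the restriction to `S` of the form `q_A(α,β) = vol(v₀ ∧ α ∧ q̃_A(β))`,
where `qt` plays the role of `q̃_A`:  `{α ∈ S | ∀ β ∈ S, q_A(α,β) = 0}`. -/
def radOn (vol : ExteriorAlgebra ℂ V →ₗ[ℂ] ℂ) (v₀ : V)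
    (qt : ExteriorAlgebra ℂ V →ₗ[ℂ] ExteriorAlgebra ℂ V)
    (S : Submodule ℂ (ExteriorAlgebra ℂ V)) : Submodule ℂ (ExteriorAlgebra ℂ V) :=
  S ⊓ ⨅ β ∈ S,
    LinearMap.ker (vol ∘ₗ LinearMap.mulLeft ℂ (ι ℂ v₀) ∘ₗ LinearMap.mulRight ℂ (qt β))

end

section Helpers

variable {V : Type*} [AddCommGroup V] [Module ℂ V]

/-! ### Contraction -/

/-- Left contraction of the exterior algebra by a functional, an antiderivation of degree `-1`:
Mathlib's contraction on Clifford algebras, for the zero quadratic form. -/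
noncomputable def ctr (d : Dual ℂ V) : ExteriorAlgebra ℂ V →ₗ[ℂ] ExteriorAlgebra ℂ V :=
  CliffordAlgebra.contractLeft (Q := (0 : QuadraticForm ℂ V)) d

theorem ctr_mul (d : Dual ℂ V) (a : V) (x : ExteriorAlgebra ℂ V) :
    ctr d (ι ℂ a * x) = d a • x - ι ℂ a * ctr d x :=
  CliffordAlgebra.contractLeft_ι_mul _ _ _

theorem ctr_ι (d : Dual ℂ V) (a : V) : ctr d (ι ℂ a) = algebraMap ℂ _ (d a) :=
  CliffordAlgebra.contractLeft_ι _ _ _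

theorem ctr_algebraMap (d : Dual ℂ V) (c : ℂ) :
    ctr d (algebraMap ℂ (ExteriorAlgebra ℂ V) c) = 0 :=
  CliffordAlgebra.contractLeft_algebraMap _ _ _

theorem ctr_mul₂ (d : Dual ℂ V) (a b : V) :
    ctr d (ι ℂ a * ι ℂ b) = ι ℂ (d a • b - d b • a) := by
  rw [ctr_mul, ctr_ι, ← Algebra.commutes, ← Algebra.smul_def, map_sub, map_smul, map_smul]

theorem ctr_mul₃ (d : Dual ℂ V) (a b c : V) :
    ctr d (ι ℂ a * ι ℂ b * ι ℂ c) =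
      d a • (ι ℂ b * ι ℂ c) - d b • (ι ℂ a * ι ℂ c) + d c • (ι ℂ a * ι ℂ b) := by
  rw [mul_assoc, ctr_mul, ctr_mul₂, map_sub, map_smul, map_smul, mul_sub, mul_smul_comm,
    mul_smul_comm]
  abel

/-- If `v ∧ x = 0` and `d v = 1`, then `x` is divisible by `v`. -/
theorem eq_mul_ctr {d : Dual ℂ V} {v : V} {x : ExteriorAlgebra ℂ V} (hd : d v = 1)
    (hx : ι ℂ v * x = 0) : x = ι ℂ v * ctr d x := by
  have h := ctr_mul d v x
  rw [hx, map_zero, hd, one_smul] at h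
  exact (sub_eq_zero.1 h.symm)

theorem swap (a b : V) : ι ℂ a * ι ℂ b = -(ι ℂ b * ι ℂ a) :=
  eq_neg_of_add_eq_zero_left (ι_add_mul_swap a b)

/-- A functional vanishing on `p`, normalised to be `1` at `v ∉ p`. -/
theorem exists_dual {p : Submodule ℂ V} {v : V} (hv : v ∉ p) :
    ∃ d : Dual ℂ V, d v = 1 ∧ ∀ x ∈ p, d x = 0 := by
  obtain ⟨f, hf, hp⟩ := Submodule.exists_le_ker_of_notMem hv
  refine ⟨(f v)⁻¹ • f, by simp [hf], fun x hx => ?_⟩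
  have : f x = 0 := hp hx
  simp [this]

/-! ### Vanishing and commutation of wedge products -/

/-- A wedge of more than `dim S` vectors of `S` vanishes. -/
theorem ιMulti_eq_zero [FiniteDimensional ℂ V] (S : Submodule ℂ V) {n : ℕ}
    (hS : finrank ℂ S < n) (v : Fin n → V) (hv : ∀ i, v i ∈ S) : ιMulti ℂ n v = 0 := by
  apply AlternatingMap.map_linearDependent
  intro h
  have h' : LinearIndependent ℂ (fun i => (⟨v i, hv i⟩ : S)) :=
    LinearIndependent.of_comp S.subtype h
  have := h'.fintype_card_le_finrank
  simp at this
  omega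

theorem mul₃_eq_zero [FiniteDimensional ℂ V] {S : Submodule ℂ V} (hS : finrank ℂ S < 3)
    {a b c : V} (ha : a ∈ S) (hb : b ∈ S) (hc : c ∈ S) : ι ℂ a * ι ℂ b * ι ℂ c = 0 := by
  have := ιMulti_eq_zero S hS ![a, b, c] (by intro i; fin_cases i <;> simpa)
  simpa [ιMulti_apply, mul_assoc] using this

theorem mul₄_eq_zero [FiniteDimensional ℂ V] {S : Submodule ℂ V} (hS : finrank ℂ S < 4)
    {a b c d : V} (ha : a ∈ S) (hb : b ∈ S) (hc : c ∈ S) (hd : d ∈ S) :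
    ι ℂ a * (ι ℂ b * ι ℂ c * ι ℂ d) = 0 := by
  have := ιMulti_eq_zero S hS ![a, b, c, d] (by intro i; fin_cases i <;> simpa)
  simpa [ιMulti_apply, mul_assoc] using this

theorem mul₆_eq_zero [FiniteDimensional ℂ V] {S : Submodule ℂ V} (hS : finrank ℂ S < 6)
    {a b c d e f : V} (ha : a ∈ S) (hb : b ∈ S) (hc : c ∈ S) (hd : d ∈ S) (he : e ∈ S)
    (hf : f ∈ S) : (ι ℂ a * ι ℂ b * ι ℂ c) * (ι ℂ d * ι ℂ e * ι ℂ f) = 0 := by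
  have := ιMulti_eq_zero S hS ![a, b, c, d, e, f] (by intro i; fin_cases i <;> simpa)
  simpa [ιMulti_apply, mul_assoc] using this

theorem wedge3_mul_wedge3 [FiniteDimensional ℂ V] {S : Submodule ℂ V} (hS : finrank ℂ S < 6)
    {x y : ExteriorAlgebra ℂ V} (hx : x ∈ wedge3 S) (hy : y ∈ wedge3 S) : x * y = 0 := by
  induction hx using Submodule.span_induction with
  | zero => simp
  | add a b _ _ ha hb => rw [add_mul, ha, hb, add_zero]
  | smul c a _ ha => rw [smul_mul_assoc, ha, smul_zero]
  | mem x hx =>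
    obtain ⟨a, ha, b, hb, c, hc, rfl⟩ := hx
    induction hy using Submodule.span_induction with
    | zero => simp
    | add a b _ _ ha hb => rw [mul_add, ha, hb, add_zero]
    | smul c a _ ha => rw [mul_smul_comm, ha, smul_zero]
    | mem y hy =>
      obtain ⟨d, hd, e, he, f, hf, rfl⟩ := hy
      exact mul₆_eq_zero hS ha hb hc hd he hf

theorem mul_wedge3 [FiniteDimensional ℂ V] {S : Submodule ℂ V} (hS : finrank ℂ S < 4)
    {v : V} (hv : v ∈ S) {y : ExteriorAlgebra ℂ V} (hy : y ∈ wedge3 S) : ι ℂ v * y = 0 := by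
  induction hy using Submodule.span_induction with
  | zero => simp
  | add a b _ _ ha hb => rw [mul_add, ha, hb, add_zero]
  | smul c a _ ha => rw [mul_smul_comm, ha, smul_zero]
  | mem y hy =>
    obtain ⟨d, hd, e, he, f, hf, rfl⟩ := hy
    exact mul₄_eq_zero hS hv hd he hf

theorem wedge2_comm {S : Submodule ℂ V} {x : ExteriorAlgebra ℂ V} (hx : x ∈ wedge2 S) (v : V) :
    ι ℂ v * x = x * ι ℂ v := by
  induction hx using Submodule.span_induction with
  | zero => simp
  | add a b _ _ ha hb => rw [mul_add, add_mul, ha, hb]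
  | smul c a _ ha => rw [mul_smul_comm, smul_mul_assoc, ha]
  | mem x hx =>
    obtain ⟨a, _, b, _, rfl⟩ := hx
    rw [← mul_assoc, swap v a, neg_mul, mul_assoc, swap v b, mul_neg, neg_neg, mul_assoc]

theorem wedge2_comm_wedge3 {S T : Submodule ℂ V} {x y : ExteriorAlgebra ℂ V}
    (hx : x ∈ wedge2 S) (hy : y ∈ wedge3 T) : y * x = x * y := by
  induction hy using Submodule.span_induction with
  | zero => simp
  | add a b _ _ ha hb => rw [mul_add, add_mul, ha, hb]
  | smul c a _ ha => rw [mul_smul_comm, smul_mul_assoc, ha]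
  | mem y hy =>
    obtain ⟨a, _, b, _, c, _, rfl⟩ := hy
    rw [mul_assoc, wedge2_comm hx, ← mul_assoc, mul_assoc (ι ℂ a), wedge2_comm hx,
      ← mul_assoc, wedge2_comm hx]
    simp only [mul_assoc]

theorem wedge3_anticomm {T : Submodule ℂ V} {y : ExteriorAlgebra ℂ V}
    (hy : y ∈ wedge3 T) (v : V) : y * ι ℂ v = -(ι ℂ v * y) := by
  induction hy using Submodule.span_induction with
  | zero => simp
  | add a b _ _ ha hb => rw [mul_add, add_mul, ha, hb, neg_add]
  | smul c a _ ha => rw [mul_smul_comm, smul_mul_assoc, ha, smul_neg]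
  | mem y hy =>
    obtain ⟨a, _, b, _, c, _, rfl⟩ := hy
    have h : ι ℂ b * ι ℂ c ∈ wedge2 (⊤ : Submodule ℂ V) :=
      Submodule.subset_span ⟨b, trivial, c, trivial, rfl⟩
    rw [mul_assoc (ι ℂ a), mul_assoc, ← wedge2_comm h, ← mul_assoc, swap a v, neg_mul, mul_assoc]

/-! ### Contractions of the spaces spanned by wedge products -/

theorem ctr_wedge2 {S : Submodule ℂ V} (d : Dual ℂ V) {x : ExteriorAlgebra ℂ V}
    (hx : x ∈ wedge2 S) : ctr d x ∈ S.map (ι ℂ) := by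
  induction hx using Submodule.span_induction with
  | zero => simp
  | add a b _ _ ha hb => rw [map_add]; exact add_mem ha hb
  | smul c a _ ha => rw [map_smul]; exact Submodule.smul_mem _ _ ha
  | mem x hx =>
    obtain ⟨a, ha, b, hb, rfl⟩ := hx
    rw [ctr_mul₂]
    exact ⟨_, sub_mem (S.smul_mem _ hb) (S.smul_mem _ ha), rfl⟩

theorem ctr_wedge3 {S : Submodule ℂ V} (d : Dual ℂ V) {x : ExteriorAlgebra ℂ V}
    (hx : x ∈ wedge3 S) : ctr d x ∈ wedge2 S := by
  induction hx using Submodule.span_induction with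
  | zero => simp
  | add a b _ _ ha hb => rw [map_add]; exact add_mem ha hb
  | smul c a _ ha => rw [map_smul]; exact Submodule.smul_mem _ _ ha
  | mem x hx =>
    obtain ⟨a, ha, b, hb, c, hc, rfl⟩ := hx
    rw [ctr_mul₃]
    have key : ∀ {p q : V}, p ∈ S → q ∈ S → ∀ r : ℂ, r • (ι ℂ p * ι ℂ q) ∈ wedge2 S :=
      fun hp hq r => Submodule.smul_mem _ _ (Submodule.subset_span ⟨_, hp, _, hq, rfl⟩)
    exact add_mem (sub_mem (key hb hc _) (key ha hc _)) (key ha hb _)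

theorem ctr_wedge2_eq_zero {S : Submodule ℂ V} {d : Dual ℂ V} (hd : ∀ v ∈ S, d v = 0)
    {x : ExteriorAlgebra ℂ V} (hx : x ∈ wedge2 S) : ctr d x = 0 := by
  induction hx using Submodule.span_induction with
  | zero => simp
  | add a b _ _ ha hb => rw [map_add, ha, hb, add_zero]
  | smul c a _ ha => rw [map_smul, ha, smul_zero]
  | mem x hx =>
    obtain ⟨a, ha, b, hb, rfl⟩ := hx
    simp [ctr_mul₂, hd a ha, hd b hb]

theorem ctr_wedge3_eq_zero {S : Submodule ℂ V} {d : Dual ℂ V} (hd : ∀ v ∈ S, d v = 0)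
    {x : ExteriorAlgebra ℂ V} (hx : x ∈ wedge3 S) : ctr d x = 0 := by
  induction hx using Submodule.span_induction with
  | zero => simp
  | add a b _ _ ha hb => rw [map_add, ha, hb, add_zero]
  | smul c a _ ha => rw [map_smul, ha, smul_zero]
  | mem x hx =>
    obtain ⟨a, ha, b, hb, c, hc, rfl⟩ := hx
    simp [ctr_mul₃, hd a ha, hd b hb, hd c hc]

/-- An element of `⋀³S` killed by two independent vectors `e`, `f` is `e ∧ f ∧ c`
with `c ∈ S`: divide by `e` and then by `f`. -/
theorem exists_factor {S : Submodule ℂ V} {x : ExteriorAlgebra ℂ V} (hx : x ∈ wedge3 S)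
    {e f : V} {d d' : Dual ℂ V} (hde : d e = 1) (hdf : d' f = 1) (hde' : d' e = 0)
    (he : ι ℂ e * x = 0) (hf : ι ℂ f * x = 0) : ∃ c ∈ S, x = ι ℂ e * ι ℂ f * ι ℂ c := by
  obtain ⟨c, hc, hc'⟩ := ctr_wedge2 d' (ctr_wedge3 d hx)
  refine ⟨c, hc, ?_⟩
  rw [hc', swap, neg_mul, mul_assoc]
  have h1 := eq_mul_ctr hde he
  have h2 := eq_mul_ctr hdf hf
  rw [h1, ctr_mul, hde', zero_smul, zero_sub, mul_neg, ← h1] at h2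
  exact h2

theorem ctr_pow (d : Dual ℂ V) (n : ℕ) {x : ExteriorAlgebra ℂ V} (hx : x ∈ ⋀[ℂ]^(n + 1) V) :
    ctr d x ∈ ⋀[ℂ]^n V := by
  induction n generalizing x with
  | zero =>
    rw [exteriorPower, zero_add, pow_one] at hx
    obtain ⟨v, rfl⟩ := hx
    rw [ctr_ι, exteriorPower, pow_zero]
    exact Submodule.algebraMap_mem _
  | succ n ih =>
    rw [exteriorPower, pow_succ'] at hx
    induction hx using Submodule.mul_induction_on' with
    | mem_mul_mem v hv y hy =>
      obtain ⟨v, rfl⟩ := hv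
      rw [ctr_mul]
      refine sub_mem (Submodule.smul_mem _ _ hy) ?_
      rw [exteriorPower, pow_succ']
      exact Submodule.mul_mem_mul ⟨v, rfl⟩ (ih hy)
    | add a _ b _ ha hb => rw [map_add]; exact add_mem ha hb

/-- An element of `⋀ⁿV` killed by more than `n` independent vectors vanishes. -/
theorem eq_zero_of_mul_eq_zero (n : ℕ) {x : ExteriorAlgebra ℂ V} (hx : x ∈ ⋀[ℂ]^n V)
    {e : Fin (n + 1) → V} (he : LinearIndependent ℂ e) (h : ∀ i, ι ℂ (e i) * x = 0) :
    x = 0 := by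
  induction n generalizing x with
  | zero =>
    rw [exteriorPower, pow_zero] at hx
    obtain ⟨c, rfl⟩ := Submodule.mem_one.1 hx
    have h0 := h 0
    rw [← Algebra.commutes, ← Algebra.smul_def, smul_eq_zero] at h0
    rcases h0 with h0 | h0
    · simp [h0]
    · exact absurd ((ι_eq_zero_iff _).1 h0) (he.ne_zero 0)
  | succ n ih =>
    obtain ⟨he', hns⟩ := linearIndependent_finSucc.1 he
    obtain ⟨d, hd, hd'⟩ := exists_dual hns
    rw [eq_mul_ctr hd (h 0), ih (ctr_pow d n hx) he', mul_zero]
    intro i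
    have h1 := ctr_mul d (e i.succ) x
    rw [h, map_zero, hd' (e i.succ) (Submodule.subset_span ⟨i, rfl⟩), zero_smul, zero_sub] at h1
    exact neg_eq_zero.1 h1.symm

/-- Contractions by three functionals that vanish on `U` kill `⋀²W ∧ U`. -/
theorem ctr_ctr_ctr_wedge2U {W U : Submodule ℂ V} {d₀ d₁ d₂ : Dual ℂ V}
    (h₀ : ∀ u ∈ U, d₀ u = 0) (h₁ : ∀ u ∈ U, d₁ u = 0) (h₂ : ∀ u ∈ U, d₂ u = 0)
    {x : ExteriorAlgebra ℂ V} (hx : x ∈ wedge2U W U) : ctr d₂ (ctr d₁ (ctr d₀ x)) = 0 := by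
  induction hx using Submodule.span_induction with
  | zero => simp
  | add a b _ _ ha hb => rw [map_add, map_add, map_add, ha, hb, add_zero]
  | smul c a _ ha => rw [map_smul, map_smul, map_smul, ha, smul_zero]
  | mem x hx =>
    obtain ⟨a, ha, b, hb, u, hu, rfl⟩ := hx
    simp [ctr_mul₃, ctr_mul₂, ctr_ι, h₀ u hu, h₁ u hu, h₂ u hu]

/-! ### The spaces `W₀ ∧ U` and `⋀²W ∧ U` -/

theorem mixedWedge_le {W U S : Submodule ℂ V} (hW : W ≤ S) (hU : U ≤ S) :
    mixedWedge W U ≤ wedge2 S := by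
  refine Submodule.span_mono ?_
  rintro _ ⟨w, hw, u, hu, rfl⟩
  exact ⟨w, hW hw, u, hU hu, rfl⟩

theorem wedge2U_le {W U S : Submodule ℂ V} (hW : W ≤ S) (hU : U ≤ S) :
    wedge2U W U ≤ wedge3 S := by
  refine Submodule.span_mono ?_
  rintro _ ⟨a, ha, b, hb, u, hu, rfl⟩
  exact ⟨a, hW ha, b, hW hb, u, hU hu, rfl⟩

theorem mul_mixedWedge {W W₀ U : Submodule ℂ V} (hW : W₀ ≤ W) {v : V} (hv : v ∈ W)
    {x : ExteriorAlgebra ℂ V} (hx : x ∈ mixedWedge W₀ U) : ι ℂ v * x ∈ wedge2U W U := by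
  induction hx using Submodule.span_induction with
  | zero => simp
  | add a b _ _ ha hb => rw [mul_add]; exact add_mem ha hb
  | smul c a _ ha => rw [mul_smul_comm]; exact Submodule.smul_mem _ _ ha
  | mem x hx =>
    obtain ⟨w, hw, u, hu, rfl⟩ := hx
    exact Submodule.subset_span ⟨v, hv, w, hW hw, u, hu, (mul_assoc _ _ _).symm⟩

/-- If `W = ℂv + W₀`, then `⋀²W ∧ U = v ∧ W₀ ∧ U + ⋀²W₀ ∧ U`. -/
theorem wedge2U_decomp {W W₀ U : Submodule ℂ V} {v : V}
    (hW : ∀ w ∈ W, ∃ c : ℂ, ∃ w' ∈ W₀, w = c • v + w') {x : ExteriorAlgebra ℂ V}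
    (hx : x ∈ wedge2U W U) :
    ∃ α ∈ mixedWedge W₀ U, ∃ γ ∈ wedge2U W₀ U, x = ι ℂ v * α + γ := by
  induction hx using Submodule.span_induction with
  | zero => exact ⟨0, zero_mem _, 0, zero_mem _, by simp⟩
  | add x y _ _ hx hy =>
    obtain ⟨α, hα, γ, hγ, rfl⟩ := hx
    obtain ⟨α', hα', γ', hγ', rfl⟩ := hy
    exact ⟨_, add_mem hα hα', _, add_mem hγ hγ', by rw [mul_add]; abel⟩
  | smul c x _ hx =>
    obtain ⟨α, hα, γ, hγ, rfl⟩ := hx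
    exact ⟨_, Submodule.smul_mem _ c hα, _, Submodule.smul_mem _ c hγ, by
      rw [mul_smul_comm, smul_add]⟩
  | mem x hx =>
    obtain ⟨a, ha, b, hb, u, hu, rfl⟩ := hx
    obtain ⟨s, a, ha', rfl⟩ := hW a ha
    obtain ⟨t, b, hb', rfl⟩ := hW b hb
    refine ⟨s • (ι ℂ b * ι ℂ u) - t • (ι ℂ a * ι ℂ u),
      sub_mem (Submodule.smul_mem _ _ (Submodule.subset_span ⟨b, hb', u, hu, rfl⟩))
        (Submodule.smul_mem _ _ (Submodule.subset_span ⟨a, ha', u, hu, rfl⟩)),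
      ι ℂ a * ι ℂ b * ι ℂ u, Submodule.subset_span ⟨a, ha', b, hb', u, hu, rfl⟩, ?_⟩
    simp only [map_add, map_smul, add_mul, mul_add, smul_mul_assoc, mul_smul_comm, ι_sq_zero,
      mul_sub, ← mul_assoc, swap a v, neg_mul, smul_zero, zero_mul]
    module

/-- If `dim W₀ = 2`, then `(W₀ ∧ U) ∧ (⋀²W₀ ∧ U) = 0`, since `⋀³W₀ = 0`. -/
theorem mixedWedge_mul_wedge2U [FiniteDimensional ℂ V] {W U : Submodule ℂ V}
    (hW : finrank ℂ W < 3) {x y : ExteriorAlgebra ℂ V} (hx : x ∈ mixedWedge W U)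
    (hy : y ∈ wedge2U W U) : x * y = 0 := by
  induction hx using Submodule.span_induction with
  | zero => simp
  | add a b _ _ ha hb => rw [add_mul, ha, hb, add_zero]
  | smul c a _ ha => rw [smul_mul_assoc, ha, smul_zero]
  | mem x hx =>
    obtain ⟨w, hw, u, hu, rfl⟩ := hx
    induction hy using Submodule.span_induction with
    | zero => simp
    | add a b _ _ ha hb => rw [mul_add, ha, hb, add_zero]
    | smul c a _ ha => rw [mul_smul_comm, ha, smul_zero]
    | mem y hy =>
      obtain ⟨a, ha, b, hb, u', hu', rfl⟩ := hy
      have h : ι ℂ a * ι ℂ b ∈ wedge2 (⊤ : Submodule ℂ V) :=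
        Submodule.subset_span ⟨a, trivial, b, trivial, rfl⟩
      rw [mul_assoc, ← mul_assoc (ι ℂ u), wedge2_comm h, mul_assoc, ← mul_assoc,
        ← mul_assoc (ι ℂ w), mul₃_eq_zero hW hw ha hb, zero_mul]

/-! ### The pairing given by the volume form -/

theorem wedge3_le_exteriorPower (S : Submodule ℂ V) : wedge3 S ≤ ⋀[ℂ]^3 V := by
  refine Submodule.span_le.2 ?_
  rintro _ ⟨a, _, b, _, c, _, rfl⟩
  have := ιMulti_range ℂ (M := V) 3 ⟨![a, b, c], rfl⟩
  simpa [ιMulti_apply, mul_assoc] using this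

theorem ι_mul_mem_exteriorPower (v : V) {n : ℕ} {x : ExteriorAlgebra ℂ V}
    (hx : x ∈ ⋀[ℂ]^n V) : ι ℂ v * x ∈ ⋀[ℂ]^(n + 1) V := by
  rw [exteriorPower, pow_succ']
  exact Submodule.mul_mem_mul ⟨v, rfl⟩ hx

/-- The wedge pairing `V × ⋀⁵V → ⋀⁶V ≅ ℂ` is nondegenerate on the right. -/
theorem eq_zero_of_vol [FiniteDimensional ℂ V] (hV : finrank ℂ V = 6)
    {vol : ExteriorAlgebra ℂ V →ₗ[ℂ] ℂ}
    (hvol : Function.Injective fun x : ⋀[ℂ]^6 V => vol x) {x : ExteriorAlgebra ℂ V}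
    (hx : x ∈ ⋀[ℂ]^5 V) (h : ∀ v : V, vol (ι ℂ v * x) = 0) : x = 0 := by
  refine eq_zero_of_mul_eq_zero 5 hx (finBasisOfFinrankEq ℂ V hV).linearIndependent fun i => ?_
  have := @hvol ⟨_, ι_mul_mem_exteriorPower (finBasisOfFinrankEq ℂ V hV i) hx⟩ 0
    (by simpa using h _)
  simpa using congrArg Subtype.val this

end Helpers

/-- With `V` six-dimensional, `A ⊆ ⋀³V` Lagrangian, `W ∈ Θ_A`,
`0 ≠ v₀ ∈ W`, `V₀` a 5-dimensional complement of `ℂv₀` with `A ∩ ⋀³V₀ = 0`,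
`W₀ = W ∩ V₀` and `U₀` a complement of `W₀` in `V₀`:  the map `α ↦ v₀∧α + q̃_A(α)`
restricts to a linear isomorphism from the radical of `q_A|_{W₀∧U₀}` onto
`A ∩ (⋀²W∧U₀)`; consequently the dimension of this radical equals
`dim(A ∩ (⋀²W∧V)) − 1`. -/
theorem stmt_9 {V : Type*} [AddCommGroup V] [Module ℂ V] [FiniteDimensional ℂ V]
    (hV : finrank ℂ V = 6)
    (vol : ExteriorAlgebra ℂ V →ₗ[ℂ] ℂ)
    (hvol : Function.Bijective fun x : ⋀[ℂ]^6 V => vol x)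
    (A : Submodule ℂ (ExteriorAlgebra ℂ V))
    (hA3 : A ≤ ⋀[ℂ]^3 V) (hA10 : finrank ℂ A = 10)
    (hLag : ∀ α ∈ A, ∀ β ∈ A, vol (α * β) = 0)
    (W : Submodule ℂ V) (hW : finrank ℂ W = 3) (hWA : wedge3 W ≤ A)
    (v₀ : V) (hv₀ : v₀ ≠ 0) (hv₀W : v₀ ∈ W)
    (V₀ : Submodule ℂ V) (hV₀ : finrank ℂ V₀ = 5)
    (hcompl : IsCompl (Submodule.span ℂ {v₀}) V₀)
    (hAV₀ : A ⊓ wedge3 V₀ = ⊥)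
    (U₀ : Submodule ℂ V) (hU₀ : U₀ ≤ V₀)
    (hdisj : (W ⊓ V₀) ⊓ U₀ = ⊥) (hsup : (W ⊓ V₀) ⊔ U₀ = V₀)
    -- `qt` is the linear map `q̃_A : ⋀²V₀ → ⋀³V₀`, characterized by `v₀∧β + q̃_A(β) ∈ A`:
    (qt : ExteriorAlgebra ℂ V →ₗ[ℂ] ExteriorAlgebra ℂ V)
    (hqt : ∀ β ∈ wedge2 V₀, qt β ∈ wedge3 V₀ ∧ ι ℂ v₀ * β + qt β ∈ A) :
    Submodule.map (LinearMap.mulLeft ℂ (ι ℂ v₀) + qt)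
        (radOn vol v₀ qt (mixedWedge (W ⊓ V₀) U₀)) = A ⊓ wedge2U W U₀ ∧
    Set.InjOn (fun α => ι ℂ v₀ * α + qt α)
        (radOn vol v₀ qt (mixedWedge (W ⊓ V₀) U₀) : Set (ExteriorAlgebra ℂ V)) ∧
    finrank ℂ ↥(radOn vol v₀ qt (mixedWedge (W ⊓ V₀) U₀)) =
      finrank ℂ ↥(A ⊓ wedge2V W) - 1 := by
  have hv₀V₀ : v₀ ∉ V₀ := fun h => hv₀ <| by
    exact Submodule.disjoint_def.1 hcompl.disjoint v₀ (Submodule.mem_span_singleton_self v₀) h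
  have hdec : ∀ v : V, ∃ c : ℂ, ∃ v' ∈ V₀, v = c • v₀ + v' := fun v => by
    have hv : v ∈ Submodule.span ℂ {v₀} ⊔ V₀ := by rw [hcompl.sup_eq_top]; trivial
    obtain ⟨a, ha, b, hb, rfl⟩ := Submodule.mem_sup.1 hv
    obtain ⟨c, rfl⟩ := Submodule.mem_span_singleton.1 ha
    exact ⟨c, b, hb, rfl⟩
  set W₀ := W ⊓ V₀ with hW₀def
  have hW₀W : W₀ ≤ W := inf_le_left
  have hW₀V₀ : W₀ ≤ V₀ := inf_le_right
  have hdecW : ∀ w ∈ W, ∃ c : ℂ, ∃ w' ∈ W₀, w = c • v₀ + w' := fun w hw => by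
    obtain ⟨c, v', hv', rfl⟩ := hdec w
    exact ⟨c, v', ⟨(W.add_mem_iff_right (W.smul_mem c hv₀W)).1 hw, hv'⟩, rfl⟩
  have hdecV₀ : ∀ v ∈ V₀, ∃ w ∈ W₀, ∃ u ∈ U₀, w + u = v := fun v hv => by
    rw [← hsup] at hv
    exact Submodule.mem_sup.1 hv
  have hW₀2 : finrank ℂ W₀ = 2 := by
    have h := Submodule.finrank_sup_add_finrank_inf_eq W V₀
    have htop : W ⊔ V₀ = ⊤ := by
      rw [eq_top_iff, ← hcompl.sup_eq_top]
      exact sup_le_sup_right (by simpa using hv₀W) _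
    rw [htop, finrank_top, hV, hW, hV₀] at h
    change finrank ℂ ↥(W ⊓ V₀) = 2
    omega
  obtain ⟨e, he, f, hf, hef, hfe⟩ : ∃ e ∈ W₀, ∃ f ∈ W₀,
      e ∉ Submodule.span ℂ {f} ∧ f ∉ Submodule.span ℂ {e} := by
    have hli := (finBasisOfFinrankEq ℂ W₀ hW₀2).linearIndependent.map' W₀.subtype W₀.ker_subtype
    refine ⟨_, (finBasisOfFinrankEq ℂ W₀ hW₀2 0).2, _, (finBasisOfFinrankEq ℂ W₀ hW₀2 1).2,
      ?_, ?_⟩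
    · simpa using hli.notMem_span_image (s := {1}) (x := 0) (by simp)
    · simpa using hli.notMem_span_image (s := {0}) (x := 1) (by simp)
  have hindep : ∀ {a b : V}, a ∈ W₀ → b ∈ W₀ → a ∉ Submodule.span ℂ {b} →
      a ∉ Submodule.span ℂ {b} ⊔ U₀ := by
    intro a b ha hb hab h
    obtain ⟨c, hc, u, hu, hcu⟩ := Submodule.mem_sup.1 h
    have hcW : c ∈ W₀ := (Submodule.span_singleton_le_iff_mem b W₀).2 hb hc
    have : u ∈ W₀ ⊓ U₀ := ⟨by rw [eq_sub_of_add_eq' hcu]; exact sub_mem ha hcW, hu⟩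
    rw [hdisj, Submodule.mem_bot] at this
    rw [this, add_zero] at hcu
    exact hab (hcu ▸ hc)
  obtain ⟨d₀, hd₀, hd₀V⟩ := exists_dual hv₀V₀
  obtain ⟨d₁, hd₁, hd₁U⟩ := exists_dual (hindep he hf hef)
  obtain ⟨d₂, hd₂, hd₂U⟩ := exists_dual (hindep hf he hfe)
  have hd₁f : d₁ f = 0 :=
    hd₁U f (Submodule.mem_sup_left (Submodule.mem_span_singleton_self f))
  have hd₂e : d₂ e = 0 :=
    hd₂U e (Submodule.mem_sup_left (Submodule.mem_span_singleton_self e))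
  have hmix : mixedWedge W₀ U₀ ≤ wedge2 V₀ := mixedWedge_le hW₀V₀ hU₀
  -- contraction by `d₀` recovers `α`, so the sum `v₀ ∧ ⋀²V₀ + ⋀³V₀` is direct
  have hctr : ∀ {α γ : ExteriorAlgebra ℂ V}, α ∈ wedge2 V₀ → γ ∈ wedge3 V₀ →
      ctr d₀ (ι ℂ v₀ * α + γ) = α := by
    intro α γ hα hγ
    rw [map_add, ctr_mul, hd₀, ctr_wedge2_eq_zero hd₀V hα, ctr_wedge3_eq_zero hd₀V hγ]
    simp
  -- `A` meets each coset of `⋀³V₀` at most once, so `v₀ ∧ α + γ ∈ A` forces `γ = q̃(α)`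
  have hgraph : ∀ {α γ : ExteriorAlgebra ℂ V}, α ∈ wedge2 V₀ → γ ∈ wedge3 V₀ →
      ι ℂ v₀ * α + γ ∈ A → qt α = γ := by
    intro α γ hα hγ h
    obtain ⟨h1, h2⟩ := hqt α hα
    have h3 : qt α - γ ∈ A ⊓ wedge3 V₀ := by
      refine ⟨?_, sub_mem h1 hγ⟩
      have := A.sub_mem h2 h
      rwa [add_sub_add_left_eq_sub] at this
    rw [hAV₀, Submodule.mem_bot] at h3
    exact sub_eq_zero.1 h3
  have hsymm : ∀ {α β : ExteriorAlgebra ℂ V}, α ∈ wedge2 V₀ → β ∈ wedge2 V₀ →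
      vol (ι ℂ v₀ * (α * qt β)) = vol (ι ℂ v₀ * (β * qt α)) := by
    intro α β hα hβ
    obtain ⟨hα3, hαA⟩ := hqt α hα
    obtain ⟨hβ3, hβA⟩ := hqt β hβ
    have h := hLag _ hαA _ hβA
    have h1 : (ι ℂ v₀ * α) * (ι ℂ v₀ * β) = 0 := by
      rw [wedge2_comm hα, mul_assoc, ← mul_assoc (ι ℂ v₀), ι_sq_zero, zero_mul, mul_zero]
    have h2 : qt α * (ι ℂ v₀ * β) = -(ι ℂ v₀ * (β * qt α)) := by
      rw [← mul_assoc, wedge3_anticomm hα3, neg_mul, mul_assoc, wedge2_comm_wedge3 hβ hα3]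
    rw [add_mul, mul_add, mul_add, h1, h2, wedge3_mul_wedge3 (by omega) hα3 hβ3, zero_add,
      add_zero, map_add, map_neg, mul_assoc] at h
    exact add_neg_eq_zero.1 h
  have hrad : ∀ {α : ExteriorAlgebra ℂ V}, α ∈ radOn vol v₀ qt (mixedWedge W₀ U₀) ↔
      α ∈ mixedWedge W₀ U₀ ∧ ∀ β ∈ mixedWedge W₀ U₀, vol (ι ℂ v₀ * (α * qt β)) = 0 := by
    intro α
    simp [radOn, Submodule.mem_iInf]
  -- `v₀ ∧ ⋀²W₀ ⊆ ⋀³W ⊆ A`, so `q̃` vanishes on `⋀²W₀`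
  have hqtW : ∀ {a b : V}, a ∈ W₀ → b ∈ W₀ → qt (ι ℂ a * ι ℂ b) = 0 := by
    intro a b ha hb
    refine hgraph (Submodule.subset_span ⟨a, hW₀V₀ ha, b, hW₀V₀ hb, rfl⟩) (zero_mem _) ?_
    rw [add_zero, ← mul_assoc]
    exact hWA (Submodule.subset_span ⟨v₀, hv₀W, a, hW₀W ha, b, hW₀W hb, rfl⟩)
  have hqtrad : ∀ {α : ExteriorAlgebra ℂ V}, α ∈ radOn vol v₀ qt (mixedWedge W₀ U₀) →
      qt α ∈ wedge2U W₀ U₀ := by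
    intro α hα
    obtain ⟨hα, hαr⟩ := hrad.1 hα
    have hα3 := (hqt α (hmix hα)).1
    -- `q̃(α)` pairs to zero with all of `W₀ ∧ V₀`
    have hpair : ∀ w ∈ W₀, ∀ v ∈ V₀, vol (ι ℂ v₀ * (ι ℂ w * ι ℂ v * qt α)) = 0 := by
      intro w hw v hv
      rw [hsymm (Submodule.subset_span ⟨w, hW₀V₀ hw, v, hv, rfl⟩) (hmix hα)]
      obtain ⟨w', hw', u, hu, rfl⟩ := hdecV₀ v hv
      rw [map_add, mul_add, map_add, hqtW hw hw', zero_add]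
      exact hαr _ (Submodule.subset_span ⟨w, hw, u, hu, rfl⟩)
    have hkill : ∀ w ∈ W₀, ι ℂ w * qt α = 0 := by
      intro w hw
      have h5 : ι ℂ v₀ * (ι ℂ w * qt α) = 0 := by
        refine eq_zero_of_vol hV hvol.1 (ι_mul_mem_exteriorPower _
          (ι_mul_mem_exteriorPower _ (wedge3_le_exteriorPower _ hα3))) fun v => ?_
        obtain ⟨c, v, hv, rfl⟩ := hdec v
        have h1 : ι ℂ v₀ * (ι ℂ v₀ * (ι ℂ w * qt α)) = 0 := by
          rw [← mul_assoc, ι_sq_zero, zero_mul]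
        have h2 : ι ℂ v * (ι ℂ v₀ * (ι ℂ w * qt α)) = ι ℂ v₀ * (ι ℂ w * ι ℂ v * qt α) := by
          rw [← mul_assoc, swap v v₀, neg_mul, mul_assoc, ← mul_assoc (ι ℂ v), swap v w,
            neg_mul, mul_neg, neg_neg]
        rw [map_add, map_smul, add_mul, smul_mul_assoc, h1, h2, smul_zero, zero_add]
        exact hpair w hw v hv
      have h6 := ctr_mul d₀ v₀ (ι ℂ w * qt α)
      rw [h5, map_zero, ctr_mul, hd₀V w (hW₀V₀ hw), ctr_wedge3_eq_zero hd₀V hα3, hd₀] at h6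
      simpa using h6.symm
    obtain ⟨c, hc, hqc⟩ := exists_factor hα3 hd₁ hd₂ hd₂e (hkill e he) (hkill f hf)
    obtain ⟨w, hw, u, hu, rfl⟩ := hdecV₀ c hc
    rw [hqc, map_add, mul_add, mul₃_eq_zero (by omega) he hf hw, zero_add]
    exact Submodule.subset_span ⟨e, he, f, hf, u, hu, rfl⟩
  have hinj : Set.InjOn (fun α => ι ℂ v₀ * α + qt α)
      (radOn vol v₀ qt (mixedWedge W₀ U₀) : Set (ExteriorAlgebra ℂ V)) := by
    intro α hα β hβ h
    have hα' := hmix (hrad.1 hα).1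
    have hβ' := hmix (hrad.1 hβ).1
    rw [← hctr hα' (hqt α hα').1, ← hctr hβ' (hqt β hβ').1]
    exact congrArg _ h
  have hmap : Submodule.map (LinearMap.mulLeft ℂ (ι ℂ v₀) + qt)
      (radOn vol v₀ qt (mixedWedge W₀ U₀)) = A ⊓ wedge2U W U₀ := by
    have hmono : wedge2U W₀ U₀ ≤ wedge2U W U₀ := by
      refine Submodule.span_mono ?_
      rintro _ ⟨a, ha, b, hb, u, hu, rfl⟩
      exact ⟨a, hW₀W ha, b, hW₀W hb, u, hu, rfl⟩
    apply le_antisymm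
    · rintro _ ⟨α, hα, rfl⟩
      have hα' := (hrad.1 hα).1
      exact ⟨(hqt α (hmix hα')).2, add_mem (mul_mixedWedge hW₀W hv₀W hα') (hmono (hqtrad hα))⟩
    · rintro z ⟨hzA, hz⟩
      obtain ⟨α, hα, γ, hγ, rfl⟩ := wedge2U_decomp hdecW hz
      have hqα : qt α = γ := hgraph (hmix hα) (wedge2U_le hW₀V₀ hU₀ hγ) hzA
      refine ⟨α, hrad.2 ⟨hα, fun β hβ => ?_⟩, by simp [hqα]⟩
      rw [hsymm (hmix hα) (hmix hβ), hqα, mixedWedge_mul_wedge2U (by omega) hβ hγ, mul_zero,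
        map_zero]
  refine ⟨hmap, hinj, ?_⟩
  have hfr : finrank ℂ ↥(radOn vol v₀ qt (mixedWedge W₀ U₀)) =
      finrank ℂ ↥(A ⊓ wedge2U W U₀) := by
    rw [← hmap, ← LinearMap.range_domRestrict]
    exact (LinearMap.finrank_range_of_inj
      fun x y h => Subtype.ext (hinj x.2 y.2 (by simpa using h))).symm
  have hfin : FiniteDimensional ℂ A := FiniteDimensional.of_finrank_pos (by omega)
  -- the generator of `⋀³W`, on which the triple contraction takes the value `1`
  set η : ExteriorAlgebra ℂ V := ι ℂ e * ι ℂ f * ι ℂ v₀ with hη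
  have hηctr : ctr d₂ (ctr d₁ (ctr d₀ η)) = 1 := by
    simp [hη, ctr_mul₃, ctr_mul₂, ctr_ι, hd₀, hd₁, hd₂, hd₁f, hd₀V e (hW₀V₀ he),
      hd₀V f (hW₀V₀ hf)]
  have hW3 : wedge3 W = Submodule.span ℂ {η} := by
    apply le_antisymm
    · intro x hx
      obtain ⟨c, hc, rfl⟩ := exists_factor hx hd₁ hd₂ hd₂e
        (mul_wedge3 (by omega) (hW₀W he) hx) (mul_wedge3 (by omega) (hW₀W hf) hx)
      obtain ⟨s, w, hw, rfl⟩ := hdecW c hc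
      rw [map_add, mul_add, mul₃_eq_zero (by omega) he hf hw, add_zero, map_smul, mul_smul_comm]
      exact Submodule.smul_mem _ _ (Submodule.mem_span_singleton_self _)
    · rw [Submodule.span_singleton_le_iff_mem]
      exact Submodule.subset_span ⟨e, hW₀W he, f, hW₀W hf, v₀, hv₀W, rfl⟩
  have hη0 : η ≠ 0 := by
    intro h
    rw [h] at hηctr
    simp at hηctr
  have hdis : wedge3 W ⊓ (A ⊓ wedge2U W U₀) = ⊥ := by
    rw [eq_bot_iff]
    rintro x ⟨hx, -, hx'⟩
    rw [hW3] at hx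
    obtain ⟨c, rfl⟩ := Submodule.mem_span_singleton.1 hx
    have h := ctr_ctr_ctr_wedge2U (fun u hu => hd₀V u (hU₀ hu))
      (fun u hu => hd₁U u (Submodule.mem_sup_right hu))
      (fun u hu => hd₂U u (Submodule.mem_sup_right hu)) hx'
    rw [map_smul, map_smul, map_smul, hηctr, smul_eq_zero] at h
    simp [h.resolve_right one_ne_zero]
  have hsum : wedge2V W = wedge3 W ⊔ wedge2U W U₀ := by
    apply le_antisymm
    · refine Submodule.span_le.2 ?_
      rintro _ ⟨a, ha, b, hb, v, rfl⟩
      obtain ⟨c, v, hv, rfl⟩ := hdec v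
      obtain ⟨w, hw, u, hu, rfl⟩ := hdecV₀ v hv
      rw [← add_assoc, map_add, mul_add]
      exact Submodule.add_mem_sup
        (Submodule.subset_span ⟨a, ha, b, hb, _, add_mem (W.smul_mem c hv₀W) (hW₀W hw), rfl⟩)
        (Submodule.subset_span ⟨a, ha, b, hb, u, hu, rfl⟩)
    · refine sup_le (Submodule.span_mono ?_) (Submodule.span_mono ?_)
      · rintro _ ⟨a, ha, b, hb, c, _, rfl⟩
        exact ⟨a, ha, b, hb, c, rfl⟩
      · rintro _ ⟨a, ha, b, hb, c, _, rfl⟩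
        exact ⟨a, ha, b, hb, c, rfl⟩
  have hmod : A ⊓ wedge2V W = wedge3 W ⊔ (A ⊓ wedge2U W U₀) := by
    rw [hsum, inf_comm, sup_inf_assoc_of_le _ hWA, inf_comm]
  have : FiniteDimensional ℂ ↥(wedge3 W) := Submodule.finiteDimensional_of_le hWA
  have : FiniteDimensional ℂ ↥(A ⊓ wedge2U W U₀) :=
    Submodule.finiteDimensional_of_le inf_le_left
  have h := Submodule.finrank_sup_add_finrank_inf_eq (wedge3 W) (A ⊓ wedge2U W U₀)
  have h1 : finrank ℂ ↥(wedge3 W) = 1 := by rw [hW3, finrank_span_singleton hη0]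
  rw [hdis, finrank_bot, h1] at h
  rw [hfr, hmod]
  omega
end

section
/- Let V be a 6-dimensional complex vector space, A ⊆ ⋀³V a Lagrangian subspace, 0 ≠ v₀ ∈ V, and V₀ a 5-dimensional subspace with V = ℂv₀ ⊕ V₀ and A ∩ ⋀³V₀ = 0. Then the radical of the form q_A (i.e. {α ∈ ⋀²V₀ : q_A(β,α) = 0 for all β ∈ ⋀²V₀}) equals {α ∈ ⋀²V₀ : v₀∧α ∈ A}, and the map α ↦ v₀∧α is a linear isomorphism from this radical onto A ∩ (v₀∧⋀²V). -/
/-!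
Let `f` be a linear functional with `f v₀ ≠ 0` and `f|V₀ = 0`. Contraction with `f` annihilates
everything generated by `V₀`, so contracting `v₀ ∧ x = 0` gives `f v₀ • x = 0`: wedging with `v₀`
is injective on `⋀²V₀` and on `⋀³V₀` (`eq_zero_of_ι_mul_eq_zero`).

If `v₀ ∧ α ∈ A`, then `q̃_A(α) ∈ A ∩ ⋀³V₀ = 0`, so `α` is in the radical. The converse needs the
pairing `(β, γ) ↦ vol (v₀ ∧ β ∧ γ)` between `⋀²V₀` and `⋀³V₀` to be nondegenerate in `γ`
(`eq_zero_of_pairing_eq_zero`). This follows from Euler's formula `∑ bᵢ ∧ (bᵢ* ⌋ w) = k w` for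
`w ∈ ⋀ᵏV` (`sum_ι_mul_contractLeft`): if `x ∧ w = 0` for every `x ∈ V`, then contracting
`bᵢ ∧ w = 0` with `bᵢ*` and summing gives `(dim V - k) w = 0`, so `w = 0` when `k ≠ dim V`.
Applying this in degrees 5 and 4 to `v₀ ∧ γ` gives `v₀ ∧ γ = 0`, hence `γ = 0`.

Surjectivity onto `A ∩ (v₀ ∧ ⋀²V)` holds because `v₀ ∧ ⋀²V = v₀ ∧ ⋀²V₀`.
-/

open Module ExteriorAlgebra

noncomputable section

variable {V : Type*} [AddCommGroup V] [Module ℂ V]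

/-- The radical of the form `q_A` on `⋀²V₀`, i.e. `{α ∈ ⋀²V₀ | ∀ β ∈ ⋀²V₀, q_A(β,α) = 0}`,
where `q_A(β,α) = vol(v₀ ∧ β ∧ q̃_A(α))` and `qt` plays the role of `q̃_A`. -/
def radFull (vol : ExteriorAlgebra ℂ V →ₗ[ℂ] ℂ) (v₀ : V)
    (qt : ExteriorAlgebra ℂ V →ₗ[ℂ] ExteriorAlgebra ℂ V)
    (V₀ : Submodule ℂ V) : Submodule ℂ (ExteriorAlgebra ℂ V) :=
  wedge2 V₀ ⊓ ⨅ β ∈ wedge2 V₀,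
    LinearMap.ker (vol ∘ₗ LinearMap.mulLeft ℂ (ι ℂ v₀) ∘ₗ LinearMap.mulLeft ℂ β ∘ₗ qt)

end

open CliffordAlgebra (contractLeft contractLeft_ι_mul) in
/-- Euler's formula: `w ↦ ∑ bᵢ ∧ (bᵢ* ⌋ w)` is multiplication by `k` on `⋀ᵏV`. -/
lemma sum_ι_mul_contractLeft {V I : Type*} [AddCommGroup V] [Module ℂ V] [Fintype I]
    (b : Basis I ℂ V) (k : ℕ) (w : ExteriorAlgebra ℂ V) (hw : w ∈ ⋀[ℂ]^k V) :
    ∑ i, ι ℂ (b i) * contractLeft (Q := (0 : QuadraticForm ℂ V)) (b.coord i) w = (k : ℂ) • w := by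
  induction k generalizing w with
  | zero =>
    rw [exteriorPower, pow_zero, Submodule.mem_one] at hw
    obtain ⟨c, rfl⟩ := hw
    simp [CliffordAlgebra.contractLeft_algebraMap]
  | succ k ih =>
    rw [exteriorPower, pow_succ'] at hw
    induction hw using Submodule.mul_induction_on' with
    | mem_mul_mem m hm n hn =>
      obtain ⟨v, rfl⟩ := hm
      have h1 : ∀ i, ι ℂ (b i) * contractLeft (Q := (0 : QuadraticForm ℂ V)) (b.coord i)
          (ι ℂ v * n) = ι ℂ (b.repr v i • b i) * n + ι ℂ v *
            (ι ℂ (b i) * contractLeft (Q := (0 : QuadraticForm ℂ V)) (b.coord i) n) := by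
        intro i
        have h2 := eq_neg_of_add_eq_zero_left (ι_add_mul_swap (R := ℂ) (b i) v)
        rw [contractLeft_ι_mul, mul_sub, ← mul_assoc, ← mul_assoc, h2, map_smul]
        simp
      rw [Finset.sum_congr rfl fun i _ => h1 i, Finset.sum_add_distrib, ← Finset.sum_mul,
        ← map_sum, b.sum_repr, ← Finset.mul_sum, ih n hn]
      push_cast
      rw [add_smul, one_smul, mul_smul_comm, add_comm]
    | add x _ y _ hx hy =>
      simp only [map_add, mul_add, Finset.sum_add_distrib, hx, hy, smul_add]

/-- Below the top degree, only zero is annihilated by wedging with every vector. -/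
lemma eq_zero_of_forall_ι_mul {V : Type*} [AddCommGroup V] [Module ℂ V] [FiniteDimensional ℂ V]
    (k : ℕ) (hk : k ≠ finrank ℂ V) (w : ExteriorAlgebra ℂ V) (hw : w ∈ ⋀[ℂ]^k V)
    (h : ∀ x : V, ι ℂ x * w = 0) : w = 0 := by
  have hE := sum_ι_mul_contractLeft (finBasis ℂ V) k w hw
  have h1 : ∀ i, ι ℂ (finBasis ℂ V i) * CliffordAlgebra.contractLeft
      (Q := (0 : QuadraticForm ℂ V)) ((finBasis ℂ V).coord i) w = w := by
    intro i
    have h2 := CliffordAlgebra.contractLeft_ι_mul (Q := (0 : QuadraticForm ℂ V))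
      ((finBasis ℂ V).coord i) (finBasis ℂ V i) w
    rw [show CliffordAlgebra.ι (0 : QuadraticForm ℂ V) (finBasis ℂ V i) * w = 0 from h _,
      map_zero, Basis.coord_apply, Basis.repr_self, Finsupp.single_eq_same, one_smul] at h2
    exact (sub_eq_zero.mp h2.symm).symm
  rw [Finset.sum_congr rfl fun i _ => h1 i, Finset.sum_const, Finset.card_univ, Fintype.card_fin,
    ← Nat.cast_smul_eq_nsmul ℂ, ← sub_eq_zero, ← sub_smul] at hE
  refine (smul_eq_zero.mp hE).resolve_left (sub_ne_zero.mpr ?_)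
  exact_mod_cast hk.symm

lemma contractLeft_wedge2 {V : Type*} [AddCommGroup V] [Module ℂ V] (V₀ : Submodule ℂ V)
    (f : Dual ℂ V) (hf : V₀ ≤ LinearMap.ker f) (x : ExteriorAlgebra ℂ V) (hx : x ∈ wedge2 V₀) :
    CliffordAlgebra.contractLeft (Q := (0 : QuadraticForm ℂ V)) f x = 0 := by
  induction hx using Submodule.span_induction with
  | mem x h =>
    obtain ⟨a, ha, b, hb, rfl⟩ := h
    have ha' : f a = 0 := hf ha
    have hb' : f b = 0 := hf hb
    rw [CliffordAlgebra.contractLeft_ι_mul, CliffordAlgebra.contractLeft_ι, ha', hb']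
    simp
  | zero => simp
  | add x y _ _ hx hy => rw [map_add, hx, hy, add_zero]
  | smul c x _ hx => rw [map_smul, hx, smul_zero]

lemma contractLeft_wedge3 {V : Type*} [AddCommGroup V] [Module ℂ V] (V₀ : Submodule ℂ V)
    (f : Dual ℂ V) (hf : V₀ ≤ LinearMap.ker f) (x : ExteriorAlgebra ℂ V) (hx : x ∈ wedge3 V₀) :
    CliffordAlgebra.contractLeft (Q := (0 : QuadraticForm ℂ V)) f x = 0 := by
  induction hx using Submodule.span_induction with
  | mem x h =>
    obtain ⟨a, ha, b, hb, c, hc, rfl⟩ := h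
    have ha' : f a = 0 := hf ha
    have hb' : f b = 0 := hf hb
    have hc' : f c = 0 := hf hc
    rw [mul_assoc, CliffordAlgebra.contractLeft_ι_mul, CliffordAlgebra.contractLeft_ι_mul,
      CliffordAlgebra.contractLeft_ι, ha', hb', hc']
    simp
  | zero => simp
  | add x y _ _ hx hy => rw [map_add, hx, hy, add_zero]
  | smul c x _ hx => rw [map_smul, hx, smul_zero]

/-- Wedging with `v₀` is injective on elements killed by contraction with `f`, if `f v₀ ≠ 0`. -/
lemma eq_zero_of_ι_mul_eq_zero {V : Type*} [AddCommGroup V] [Module ℂ V]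
    (f : Dual ℂ V) (v₀ : V) (hf : f v₀ ≠ 0) (x : ExteriorAlgebra ℂ V)
    (hx : CliffordAlgebra.contractLeft (Q := (0 : QuadraticForm ℂ V)) f x = 0)
    (h : ι ℂ v₀ * x = 0) : x = 0 := by
  have h2 := CliffordAlgebra.contractLeft_ι_mul (Q := (0 : QuadraticForm ℂ V)) f v₀ x
  rw [show CliffordAlgebra.ι (0 : QuadraticForm ℂ V) v₀ * x = 0 from h, hx, map_zero, mul_zero,
    sub_zero] at h2
  exact (smul_eq_zero.mp h2.symm).resolve_left hf

lemma exists_eq_smul_add {V : Type*} [AddCommGroup V] [Module ℂ V] (v₀ : V)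
    (V₀ : Submodule ℂ V) (hcompl : IsCompl (Submodule.span ℂ {v₀}) V₀) (v : V) :
    ∃ c : ℂ, ∃ w ∈ V₀, v = c • v₀ + w := by
  have hv : v ∈ Submodule.span ℂ {v₀} ⊔ V₀ := by rw [hcompl.sup_eq_top]; trivial
  obtain ⟨y, hy, w, hw, rfl⟩ := Submodule.mem_sup.mp hv
  obtain ⟨c, rfl⟩ := Submodule.mem_span_singleton.mp hy
  exact ⟨c, w, hw, rfl⟩

lemma ι_mul_mem {V : Type*} [AddCommGroup V] [Module ℂ V] (k : ℕ) (v : V)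
    (x : ExteriorAlgebra ℂ V) (hx : x ∈ ⋀[ℂ]^k V) : ι ℂ v * x ∈ ⋀[ℂ]^(k + 1) V := by
  rw [exteriorPower, pow_succ']
  exact Submodule.mul_mem_mul ⟨v, rfl⟩ hx

lemma wedge2_le {V : Type*} [AddCommGroup V] [Module ℂ V] (W : Submodule ℂ V) :
    wedge2 W ≤ ⋀[ℂ]^2 V := by
  refine Submodule.span_le.mpr ?_
  rintro _ ⟨a, -, b, -, rfl⟩
  rw [SetLike.mem_coe, exteriorPower, pow_two]
  exact Submodule.mul_mem_mul ⟨a, rfl⟩ ⟨b, rfl⟩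

lemma wedge3_le {V : Type*} [AddCommGroup V] [Module ℂ V] (W : Submodule ℂ V) :
    wedge3 W ≤ ⋀[ℂ]^3 V := by
  refine Submodule.span_le.mpr ?_
  rintro _ ⟨a, -, b, -, c, -, rfl⟩
  rw [SetLike.mem_coe, exteriorPower, pow_succ, pow_two]
  exact Submodule.mul_mem_mul (Submodule.mul_mem_mul ⟨a, rfl⟩ ⟨b, rfl⟩) ⟨c, rfl⟩

/-- Wedging `c v₀ + w` with a multiple of `v₀` only sees `w`, up to sign. -/
lemma ι_mul_ι_mul_eq {V : Type*} [AddCommGroup V] [Module ℂ V] (v₀ w : V) (c : ℂ)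
    (x : ExteriorAlgebra ℂ V) :
    ι ℂ (c • v₀ + w) * (ι ℂ v₀ * x) = -(ι ℂ v₀ * (ι ℂ w * x)) := by
  have h := eq_neg_of_add_eq_zero_left (ι_add_mul_swap (R := ℂ) w v₀)
  rw [← mul_assoc, map_add, map_smul, add_mul, smul_mul_assoc, ι_sq_zero, smul_zero, zero_add, h,
    neg_mul, mul_assoc]

/-- `v₀ ∧ ⋀²V ⊆ v₀ ∧ ⋀²V₀`: the `v₀`-components of the factors contribute nothing. -/
lemma exists_wedge2_ι_mul_eq {V : Type*} [AddCommGroup V] [Module ℂ V] (v₀ : V)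
    (V₀ : Submodule ℂ V) (hcompl : IsCompl (Submodule.span ℂ {v₀}) V₀)
    (x : ExteriorAlgebra ℂ V) (hx : x ∈ ⋀[ℂ]^2 V) :
    ∃ a ∈ wedge2 V₀, ι ℂ v₀ * a = ι ℂ v₀ * x := by
  rw [exteriorPower, pow_two] at hx
  induction hx using Submodule.mul_induction_on' with
  | mem_mul_mem m hm n hn =>
    obtain ⟨u, rfl⟩ := hm
    obtain ⟨v, rfl⟩ := hn
    obtain ⟨c, w, hw, rfl⟩ := exists_eq_smul_add v₀ V₀ hcompl u
    obtain ⟨d, z, hz, rfl⟩ := exists_eq_smul_add v₀ V₀ hcompl v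
    refine ⟨ι ℂ w * ι ℂ z, Submodule.subset_span ⟨w, hw, z, hz, rfl⟩, ?_⟩
    have h0 := ι_sq_zero (R := ℂ) v₀
    have h := eq_neg_of_add_eq_zero_left (ι_add_mul_swap (R := ℂ) v₀ w)
    have h1 : ι ℂ v₀ * (ι ℂ w * ι ℂ v₀) = 0 := by
      rw [← mul_assoc, h, neg_mul, mul_assoc, h0, mul_zero, neg_zero]
    have h2 : ι ℂ v₀ * (ι ℂ v₀ * ι ℂ z) = 0 := by rw [← mul_assoc, h0, zero_mul]
    simp only [map_add, map_smul, add_mul, mul_add, smul_mul_assoc, mul_smul_comm, h0, h1, h2,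
      smul_zero, zero_add]
  | add x _ y _ hx hy =>
    obtain ⟨a, ha, ha'⟩ := hx
    obtain ⟨b, hb, hb'⟩ := hy
    exact ⟨a + b, add_mem ha hb, by rw [mul_add, mul_add, ha', hb']⟩

/-- The pairing `(β, γ) ↦ vol (v₀ ∧ β ∧ γ)` of `⋀²V₀` with `⋀³V₀` is nondegenerate in `γ`. -/
lemma eq_zero_of_pairing_eq_zero {V : Type*} [AddCommGroup V] [Module ℂ V]
    [FiniteDimensional ℂ V] (hV : finrank ℂ V = 6) (vol : ExteriorAlgebra ℂ V →ₗ[ℂ] ℂ)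
    (hvol : Function.Bijective fun x : ⋀[ℂ]^6 V => vol x)
    (v₀ : V) (V₀ : Submodule ℂ V) (hcompl : IsCompl (Submodule.span ℂ {v₀}) V₀)
    (f : Dual ℂ V) (hf₀ : f v₀ ≠ 0) (hf : V₀ ≤ LinearMap.ker f)
    (γ : ExteriorAlgebra ℂ V) (hγ : γ ∈ wedge3 V₀)
    (h : ∀ β ∈ wedge2 V₀, vol (ι ℂ v₀ * (β * γ)) = 0) : γ = 0 := by
  have hγ3 := wedge3_le V₀ hγ
  refine eq_zero_of_ι_mul_eq_zero f v₀ hf₀ γ (contractLeft_wedge3 V₀ f hf γ hγ) ?_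
  have hδ := ι_mul_mem 3 v₀ γ hγ3
  refine eq_zero_of_forall_ι_mul 4 (by omega) _ hδ fun y => ?_
  refine eq_zero_of_forall_ι_mul 5 (by omega) _ (ι_mul_mem 4 y _ hδ) fun x => ?_
  obtain ⟨c, w, hw, rfl⟩ := exists_eq_smul_add v₀ V₀ hcompl x
  obtain ⟨d, z, hz, rfl⟩ := exists_eq_smul_add v₀ V₀ hcompl y
  rw [ι_mul_ι_mul_eq, mul_neg, ι_mul_ι_mul_eq, neg_neg]
  have hmem := ι_mul_mem 5 v₀ _ (ι_mul_mem 4 w _ (ι_mul_mem 3 z γ hγ3))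
  have h1 := h _ (Submodule.subset_span ⟨w, hw, z, hz, rfl⟩)
  rw [mul_assoc] at h1
  have h2 : (⟨_, hmem⟩ : ⋀[ℂ]^6 V) = 0 := hvol.1 (by simpa using h1)
  exact congrArg Subtype.val h2

/-- With `V` six-dimensional, `A ⊆ ⋀³V` Lagrangian, `0 ≠ v₀ ∈ V` and `V₀`
a 5-dimensional complement of `ℂv₀` with `A ∩ ⋀³V₀ = 0`:  the radical of `q_A` equals
`{α ∈ ⋀²V₀ : v₀∧α ∈ A}`, and `α ↦ v₀∧α` is a linear isomorphism from this radical onto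
`A ∩ (v₀∧⋀²V)`. -/
theorem stmt_11 {V : Type*} [AddCommGroup V] [Module ℂ V] [FiniteDimensional ℂ V]
    (hV : finrank ℂ V = 6)
    (vol : ExteriorAlgebra ℂ V →ₗ[ℂ] ℂ)
    (hvol : Function.Bijective fun x : ⋀[ℂ]^6 V => vol x)
    (A : Submodule ℂ (ExteriorAlgebra ℂ V))
    (hA3 : A ≤ ⋀[ℂ]^3 V) (hA10 : finrank ℂ A = 10)
    (hLag : ∀ α ∈ A, ∀ β ∈ A, vol (α * β) = 0)
    (v₀ : V) (hv₀ : v₀ ≠ 0)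
    (V₀ : Submodule ℂ V) (hV₀ : finrank ℂ V₀ = 5)
    (hcompl : IsCompl (Submodule.span ℂ {v₀}) V₀)
    (hAV₀ : A ⊓ wedge3 V₀ = ⊥)
    -- `qt` is the linear map `q̃_A : ⋀²V₀ → ⋀³V₀`, characterized by `v₀∧β + q̃_A(β) ∈ A`:
    (qt : ExteriorAlgebra ℂ V →ₗ[ℂ] ExteriorAlgebra ℂ V)
    (hqt : ∀ β ∈ wedge2 V₀, qt β ∈ wedge3 V₀ ∧ ι ℂ v₀ * β + qt β ∈ A) :
    radFull vol v₀ qt V₀ =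
        wedge2 V₀ ⊓ Submodule.comap (LinearMap.mulLeft ℂ (ι ℂ v₀)) A ∧
    Submodule.map (LinearMap.mulLeft ℂ (ι ℂ v₀)) (radFull vol v₀ qt V₀) =
        A ⊓ vWedge2 v₀ ∧
    Set.InjOn (fun α => ι ℂ v₀ * α)
        (radFull vol v₀ qt V₀ : Set (ExteriorAlgebra ℂ V)) := by
  obtain ⟨f, hf₀, hf⟩ : ∃ f : Dual ℂ V, f v₀ ≠ 0 ∧ V₀ ≤ LinearMap.ker f := by
    refine Submodule.exists_le_ker_of_notMem fun hmem => hv₀ ?_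
    exact (Submodule.disjoint_def.mp hcompl.disjoint) v₀ (Submodule.mem_span_singleton_self v₀) hmem
  have mem_rad : ∀ α, α ∈ radFull vol v₀ qt V₀ ↔
      α ∈ wedge2 V₀ ∧ ∀ β ∈ wedge2 V₀, vol (ι ℂ v₀ * (β * qt α)) = 0 := by
    intro α
    simp [radFull, Submodule.mem_iInf]
  have hrad : radFull vol v₀ qt V₀ =
      wedge2 V₀ ⊓ Submodule.comap (LinearMap.mulLeft ℂ (ι ℂ v₀)) A := by
    ext α
    rw [mem_rad, Submodule.mem_inf, Submodule.mem_comap, LinearMap.mulLeft_apply]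
    refine and_congr_right fun hα => ⟨fun h => ?_, fun h => ?_⟩
    · have h0 := eq_zero_of_pairing_eq_zero hV vol hvol v₀ V₀ hcompl f hf₀ hf _ (hqt α hα).1 h
      simpa [h0] using (hqt α hα).2
    · have hq : qt α ∈ A ⊓ wedge3 V₀ :=
        ⟨by simpa using sub_mem (hqt α hα).2 h, (hqt α hα).1⟩
      rw [hAV₀, Submodule.mem_bot] at hq
      simp [hq]
  refine ⟨hrad, ?_, ?_⟩
  · rw [hrad]
    ext x
    constructor
    · rintro ⟨α, ⟨hα, hαA⟩, rfl⟩
      exact ⟨hαA, α, wedge2_le V₀ hα, rfl⟩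
    · rintro ⟨hxA, η, hη, rfl⟩
      obtain ⟨α, hα, he⟩ := exists_wedge2_ι_mul_eq v₀ V₀ hcompl η hη
      refine ⟨α, ⟨hα, ?_⟩, he⟩
      rw [SetLike.mem_coe, Submodule.mem_comap, LinearMap.mulLeft_apply, he]
      exact hxA
  · intro a ha b hb hab
    have hab2 := sub_mem ((mem_rad a).mp ha).1 ((mem_rad b).mp hb).1
    refine sub_eq_zero.mp (eq_zero_of_ι_mul_eq_zero f v₀ hf₀ _
      (contractLeft_wedge2 V₀ f hf _ hab2) ?_)
    rw [mul_sub]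
    exact sub_eq_zero.mpr hab
end

section
/- Let V₀ be a 5-dimensional complex vector space and K ⊂ ⋀²V₀ a 2-dimensional subspace. Assume: (i) there is a 2-dimensional subspace W₀ ⊂ V₀ such that {γ ∈ K : γ∧γ = 0 in ⋀⁴V₀} = ⋀²W₀ (so the decomposable vectors of K form exactly the line ⋀²W₀ ⊂ K); (ii) K is not contained in W₀∧V₀ (the span of {w∧v : w ∈ W₀, v ∈ V₀}). Then there exists a basis {w₁, w₂, u₁, u₂, u₃} of V₀ such that W₀ = span(w₁,w₂) and K = span(w₁∧w₂, w₁∧u₁ + u₂∧u₃). -/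
/-!
Let `a, b` be a basis of `W₀`, so that `a ∧ b ∈ K` by the hypothesis on decomposable vectors, and
choose `κ ∈ K` outside `W₀ ∧ V₀`. The image of `κ` in `⋀²(V₀/W₀)` is nonzero, and it is
decomposable because `V₀/W₀` has dimension three (`exists_factorization`). Hence
`κ = a ∧ x + b ∧ y + u ∧ v` with `u, v` independent modulo `W₀`. Let `f` complete `a, b, u, v` to a
basis. Changing `u` and `v` by elements of `W₀` (`exists_normal_form`) yields
`κ = t (a ∧ b) + w₁ ∧ f + u' ∧ v'` with `w₁ ∈ W₀`.

If `w₁ = 0`, then `u' ∧ v' = κ - t (a ∧ b)` is a decomposable vector of `K`, hence lies in `⋀²W₀`,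
which contradicts `κ ∉ W₀ ∧ V₀`. So `w₁ ≠ 0`, and there is `w₂ ∈ W₀` with `w₁ ∧ w₂ = a ∧ b`
(`exists_partner`). The vectors `w₁ ∧ w₂` and `w₁ ∧ f + u' ∧ v'` of `K` are independent, because the
first is a nonzero element of `W₀ ∧ V₀` and the second is not in `W₀ ∧ V₀`; so they span `K`.
-/

open Module ExteriorAlgebra

noncomputable section

variable {V : Type*} [AddCommGroup V] [Module ℂ V]

/-- The subspace `W₀ ∧ V` (span of `w∧v`, `w ∈ W₀`, `v ∈ V`) inside the exterior algebra. -/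
def wedgeWithAll (W₀ : Submodule ℂ V) : Submodule ℂ (ExteriorAlgebra ℂ V) :=
  Submodule.span ℂ {z | ∃ w ∈ W₀, ∃ v : V, z = ι ℂ w * ι ℂ v}

end

section
variable {V : Type*} [AddCommGroup V] [Module ℂ V]

lemma ι_mul_self (x : V) : ι ℂ x * ι ℂ x = 0 := ι_sq_zero x

lemma ι_swap (x y : V) : ι ℂ y * ι ℂ x = -(ι ℂ x * ι ℂ y) :=
  eq_neg_of_add_eq_zero_left (ι_add_mul_swap y x)

lemma exists_coords {a b c d e : V} (h : Submodule.span ℂ {a, b, c, d, e} = ⊤) (x : V) :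
    ∃ p q r s t : ℂ, x = p • a + q • b + r • c + s • d + t • e := by
  have hx : x ∈ Submodule.span ℂ {a, b, c, d, e} := h ▸ Submodule.mem_top
  simp only [Submodule.mem_span_insert, Submodule.mem_span_singleton] at hx
  obtain ⟨p, _, ⟨q, _, ⟨r, _, ⟨s, _, ⟨t, rfl⟩, rfl⟩, rfl⟩, rfl⟩, rfl⟩ := hx
  exact ⟨p, q, r, s, t, by module⟩

/-- A bivector splits as a part in `⟨a, b⟩ ∧ V` plus a combination of the wedge products of the
three remaining vectors `c, d, e` of a spanning family. -/
lemma exists_expansion {a b c d e : V} (h : Submodule.span ℂ {a, b, c, d, e} = ⊤)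
    {κ : ExteriorAlgebra ℂ V} (hκ : κ ∈ ⋀[ℂ]^2 V) :
    ∃ (x y : V) (α β γ : ℂ), κ = ι ℂ a * ι ℂ x + ι ℂ b * ι ℂ y +
      (α • (ι ℂ c * ι ℂ d) + β • (ι ℂ c * ι ℂ e) + γ • (ι ℂ d * ι ℂ e)) := by
  rw [exteriorPower, pow_two] at hκ
  induction hκ using Submodule.mul_induction_on' with
  | mem_mul_mem m hm n hn =>
    obtain ⟨x, rfl⟩ := hm
    obtain ⟨y, rfl⟩ := hn
    obtain ⟨p, q, r, s, t, rfl⟩ := exists_coords h x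
    obtain ⟨p', q', r', s', t', rfl⟩ := exists_coords h y
    refine ⟨p • (q' • b + r' • c + s' • d + t' • e) - p' • (q • b + r • c + s • d + t • e),
      q • (r' • c + s' • d + t' • e) - q' • (r • c + s • d + t • e),
      r * s' - s * r', r * t' - t * r', s * t' - t * s', ?_⟩
    simp only [map_add, map_sub, map_smul, mul_add, add_mul, mul_sub, smul_mul_assoc,
      mul_smul_comm, ι_mul_self, ι_swap a b, ι_swap a c, ι_swap a d, ι_swap a e, ι_swap b c,
      ι_swap b d, ι_swap b e, ι_swap c d, ι_swap c e, ι_swap d e]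
    module
  | add m hm n hn ihm ihn =>
    obtain ⟨x, y, α, β, γ, rfl⟩ := ihm
    obtain ⟨x', y', α', β', γ', rfl⟩ := ihn
    refine ⟨x + x', y + y', α + α', β + β', γ + γ', ?_⟩
    simp only [map_add, mul_add]
    module

lemma span_top_of_mem {a b c d e a' b' c' d' e' : V}
    (h : Submodule.span ℂ {a, b, c, d, e} = ⊤)
    (ha : a ∈ Submodule.span ℂ {a', b', c', d', e'})
    (hb : b ∈ Submodule.span ℂ {a', b', c', d', e'})
    (hc : c ∈ Submodule.span ℂ {a', b', c', d', e'})
    (hd : d ∈ Submodule.span ℂ {a', b', c', d', e'})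
    (he : e ∈ Submodule.span ℂ {a', b', c', d', e'}) :
    Submodule.span ℂ {a', b', c', d', e'} = ⊤ := by
  rw [eq_top_iff, ← h, Submodule.span_le]
  rintro x (rfl | rfl | rfl | rfl | rfl) <;> assumption

lemma mem_span_five {a b c d e x : V} (p q r s t : ℂ)
    (hx : x = p • a + q • b + r • c + s • d + t • e) :
    x ∈ Submodule.span ℂ {a, b, c, d, e} := by
  simp only [Submodule.mem_span_insert, Submodule.mem_span_singleton]
  exact ⟨p, _, ⟨q, _, ⟨r, _, ⟨s, _, ⟨t, rfl⟩, rfl⟩, rfl⟩, rfl⟩, by rw [hx]; module⟩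

/-- A nonzero bivector in the three-dimensional space `⟨c, d, e⟩` is decomposable, and its two
factors can be completed to a basis together with one further vector `f`. -/
lemma exists_factorization {a b c d e : V} (h : Submodule.span ℂ {a, b, c, d, e} = ⊤) {α β γ : ℂ}
    (hne : ¬(α = 0 ∧ β = 0 ∧ γ = 0)) :
    ∃ f u v : V, Submodule.span ℂ {a, b, f, u, v} = ⊤ ∧
      α • (ι ℂ c * ι ℂ d) + β • (ι ℂ c * ι ℂ e) + γ • (ι ℂ d * ι ℂ e) = ι ℂ u * ι ℂ v := by
  by_cases hα : α = 0
  · subst hα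
    by_cases hβ : β = 0
    · subst hβ
      have hγ : γ ≠ 0 := by simpa using hne
      refine ⟨c, d, γ • e, span_top_of_mem h (mem_span_five 1 0 0 0 0 (by module))
        (mem_span_five 0 1 0 0 0 (by module)) (mem_span_five 0 0 1 0 0 (by module))
        (mem_span_five 0 0 0 1 0 (by module))
        (mem_span_five 0 0 0 0 γ⁻¹ (by match_scalars <;> simp [hγ])), ?_⟩
      simp only [map_smul, mul_smul_comm]
      module
    · refine ⟨d, β • c + γ • d, e, span_top_of_mem h (mem_span_five 1 0 0 0 0 (by module))
        (mem_span_five 0 1 0 0 0 (by module))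
        (mem_span_five 0 0 (-γ / β) β⁻¹ 0 (by match_scalars <;> field_simp; ring))
        (mem_span_five 0 0 1 0 0 (by module))
        (mem_span_five 0 0 0 0 1 (by module)), ?_⟩
      simp only [map_add, map_smul, add_mul, smul_mul_assoc]
      module
  · refine ⟨e, c - (γ / α) • e, α • d + β • e,
      span_top_of_mem h (mem_span_five 1 0 0 0 0 (by module))
        (mem_span_five 0 1 0 0 0 (by module))
        (mem_span_five 0 0 (γ / α) 1 0 (by module))
        (mem_span_five 0 0 (-β / α) 0 α⁻¹ (by match_scalars <;> field_simp; ring))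
        (mem_span_five 0 0 1 0 0 (by module)), ?_⟩
    simp only [map_add, map_sub, map_smul, mul_add, sub_mul, smul_mul_assoc, mul_smul_comm,
      ι_mul_self, ι_swap d e]
    match_scalars <;> field_simp

/-- If `a ∧ b = 0`, contracting with a functional `f` gives `f(a) b = f(b) a`, so every `f` kills
`a` when `a, b` are independent. -/
lemma ι_mul_ne_zero {a b : V} (h : LinearIndependent ℂ ![a, b]) : ι ℂ a * ι ℂ b ≠ 0 := by
  intro h0
  have ha : a ≠ 0 := h.ne_zero 0
  refine ha ((Module.forall_dual_apply_eq_zero_iff ℂ a).1 fun f => ?_)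
  have h1 := congrArg (CliffordAlgebra.contractLeft f) h0
  have h2 : f a • ι ℂ b - ι ℂ a * algebraMap ℂ _ (f b) = 0 := by
    rw [← CliffordAlgebra.contractLeft_ι, ← map_zero (CliffordAlgebra.contractLeft f), ← h1]
    exact (CliffordAlgebra.contractLeft_ι_mul _ _ _).symm
  rw [← Algebra.commutes, ← Algebra.smul_def, ← map_smul, ← map_smul, ← map_sub,
    ι_eq_zero_iff] at h2
  exact (LinearIndependent.pair_iff.1 h (-f b) (f a) (by rw [← h2]; module)).2

/-- Completing the product: replacing `u, v` by suitable `u' ∈ u + ⟨a, b⟩` and `v' ∈ v + ⟨a, b⟩`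
absorbs every term `a ∧ u`, `a ∧ v`, `b ∧ u`, `b ∧ v`, at the cost of a multiple of `a ∧ b`. -/
lemma exists_normal_form {a b c u v x y : V} (h : Submodule.span ℂ {a, b, c, u, v} = ⊤) :
    ∃ (p q t : ℂ) (u' v' : V), Submodule.span ℂ {a, b, c, u', v'} = ⊤ ∧
      ι ℂ a * ι ℂ x + ι ℂ b * ι ℂ y + ι ℂ u * ι ℂ v =
        t • (ι ℂ a * ι ℂ b) + (ι ℂ (p • a + q • b) * ι ℂ c + ι ℂ u' * ι ℂ v') := by
  obtain ⟨x₁, x₂, x₃, x₄, x₅, rfl⟩ := exists_coords h x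
  obtain ⟨y₁, y₂, y₃, y₄, y₅, rfl⟩ := exists_coords h y
  refine ⟨x₃, y₃, x₂ - y₁ + x₅ * y₄ - y₅ * x₄, u + x₅ • a + y₅ • b, v - x₄ • a - y₄ • b,
    span_top_of_mem h (mem_span_five 1 0 0 0 0 (by module))
      (mem_span_five 0 1 0 0 0 (by module)) (mem_span_five 0 0 1 0 0 (by module))
      (mem_span_five (-x₅) (-y₅) 0 1 0 (by module))
      (mem_span_five x₄ y₄ 0 0 1 (by module)), ?_⟩
  simp only [map_add, map_sub, map_smul, mul_add, add_mul, mul_sub, smul_mul_assoc,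
    mul_smul_comm, ι_mul_self, ι_swap a b, ι_swap a u, ι_swap b u]
  module

/-- A nonzero vector of `⟨a, b⟩` has a partner in `⟨a, b⟩` whose wedge product with it is exactly
`a ∧ b`. -/
lemma exists_partner {a b : V} {p q : ℂ} (h : ¬(p = 0 ∧ q = 0)) :
    ∃ w : V, ι ℂ (p • a + q • b) * ι ℂ w = ι ℂ a * ι ℂ b ∧
      Submodule.span ℂ {p • a + q • b, w} = Submodule.span ℂ {a, b} := by
  by_cases hp : p = 0
  · subst hp
    have hq : q ≠ 0 := by simpa using h
    refine ⟨-q⁻¹ • a, ?_, le_antisymm ?_ ?_⟩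
    · simp only [map_add, map_smul, add_mul, smul_mul_assoc, mul_smul_comm, ι_mul_self,
        ι_swap a b]
      match_scalars
      field_simp
    · rw [Submodule.span_le]
      rintro x (rfl | rfl)
      · exact Submodule.mem_span_pair.2 ⟨_, _, rfl⟩
      · exact Submodule.mem_span_pair.2 ⟨-q⁻¹, 0, by module⟩
    · rw [Submodule.span_le]
      rintro x (rfl | rfl)
      · exact Submodule.mem_span_pair.2 ⟨0, -q, by match_scalars <;> field_simp <;> ring⟩
      · exact Submodule.mem_span_pair.2 ⟨q⁻¹, 0, by match_scalars <;> field_simp; ring⟩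
  · refine ⟨p⁻¹ • b, ?_, le_antisymm ?_ ?_⟩
    · simp only [map_add, map_smul, add_mul, smul_mul_assoc, mul_smul_comm, ι_mul_self]
      match_scalars
      field_simp
    · rw [Submodule.span_le]
      rintro x (rfl | rfl)
      · exact Submodule.mem_span_pair.2 ⟨_, _, rfl⟩
      · exact Submodule.mem_span_pair.2 ⟨0, p⁻¹, by module⟩
    · rw [Submodule.span_le]
      rintro x (rfl | rfl)
      · exact Submodule.mem_span_pair.2 ⟨p⁻¹, -q, by match_scalars <;> field_simp; ring⟩
      · exact Submodule.mem_span_pair.2 ⟨0, p, by match_scalars <;> field_simp <;> ring⟩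

/-- A basis `a, b` of `W` extended to the ambient space. Only the spanning property of the five
vectors is recorded, since in dimension five it implies independence. -/
lemma exists_adapted_basis [FiniteDimensional ℂ V] (hdim : finrank ℂ V = 5)
    (W : Submodule ℂ V) (hW : finrank ℂ W = 2) :
    ∃ a b c d e : V, LinearIndependent ℂ ![a, b] ∧ W = Submodule.span ℂ {a, b} ∧
      Submodule.span ℂ {a, b, c, d, e} = ⊤ := by
  obtain ⟨W', hW'⟩ := W.exists_isCompl
  have hW'3 : finrank ℂ W' = 3 := by
    have := Submodule.finrank_add_eq_of_isCompl hW'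
    omega
  let f := finBasisOfFinrankEq ℂ W hW
  let g := finBasisOfFinrankEq ℂ W' hW'3
  have hf : W = Submodule.span ℂ {(f 0 : V), (f 1 : V)} := by
    have := congrArg (Submodule.map W.subtype) f.span_eq
    rw [Submodule.map_span, Submodule.map_top, Submodule.range_subtype, ← Set.range_comp] at this
    refine this.symm.trans ?_
    congr 1
    ext x
    simp [Fin.exists_fin_two, eq_comm]
  have hg : W' = Submodule.span ℂ {(g 0 : V), (g 1 : V), (g 2 : V)} := by
    have := congrArg (Submodule.map W'.subtype) g.span_eq
    rw [Submodule.map_span, Submodule.map_top, Submodule.range_subtype, ← Set.range_comp] at this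
    refine this.symm.trans ?_
    congr 1
    ext x
    simp [Fin.exists_fin_succ, eq_comm]
  refine ⟨f 0, f 1, g 0, g 1, g 2, ?_, hf, ?_⟩
  · have := f.linearIndependent.map' W.subtype (Submodule.ker_subtype W)
    rwa [show W.subtype ∘ f = ![(f 0 : V), (f 1 : V)] by
      ext i; fin_cases i <;> rfl] at this
  · refine Eq.trans ?_ ((congrArg₂ (· ⊔ ·) hf hg).symm.trans hW'.sup_eq_top)
    rw [← Submodule.span_union]
    congr 1
    ext x
    simp only [Set.mem_union, Set.mem_insert_iff, Set.mem_singleton_iff]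
    tauto
end

/-- Let `V₀` be a 5-dimensional complex vector space and `K ⊂ ⋀²V₀` a
2-dimensional subspace.  Assume (i) there is a 2-dimensional subspace `W₀ ⊂ V₀` such that
the decomposable vectors of `K` (those `γ` with `γ∧γ = 0`) form exactly the line `⋀²W₀`,
and (ii) `K ⊄ W₀∧V₀`.  Then there is a basis `{w₁,w₂,u₁,u₂,u₃}` of `V₀` with
`W₀ = span(w₁,w₂)` and `K = span(w₁∧w₂, w₁∧u₁ + u₂∧u₃)`. -/
theorem stmt_13 {V₀ : Type*} [AddCommGroup V₀] [Module ℂ V₀] [FiniteDimensional ℂ V₀]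
    (hdim : finrank ℂ V₀ = 5)
    (K : Submodule ℂ (ExteriorAlgebra ℂ V₀))
    (hK2 : K ≤ ⋀[ℂ]^2 V₀) (hKdim : finrank ℂ K = 2)
    (W₀ : Submodule ℂ V₀) (hW₀ : finrank ℂ W₀ = 2)
    (hdec : {γ : ExteriorAlgebra ℂ V₀ | γ ∈ K ∧ γ * γ = 0} =
      (wedge2 W₀ : Set (ExteriorAlgebra ℂ V₀)))
    (hnc : ¬K ≤ wedgeWithAll W₀) :
    ∃ w₁ w₂ u₁ u₂ u₃ : V₀,
      LinearIndependent ℂ ![w₁, w₂, u₁, u₂, u₃] ∧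
      Submodule.span ℂ {w₁, w₂, u₁, u₂, u₃} = ⊤ ∧
      W₀ = Submodule.span ℂ {w₁, w₂} ∧
      K = Submodule.span ℂ
        {ι ℂ w₁ * ι ℂ w₂, ι ℂ w₁ * ι ℂ u₁ + ι ℂ u₂ * ι ℂ u₃} := by
  obtain ⟨a, b, c, d, e, hab, hW, hspan⟩ := exists_adapted_basis hdim W₀ hW₀
  have haW : a ∈ W₀ := hW ▸ Submodule.subset_span (by simp)
  have hbW : b ∈ W₀ := hW ▸ Submodule.subset_span (by simp)
  have hle : wedge2 W₀ ≤ wedgeWithAll W₀ := by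
    apply Submodule.span_mono
    rintro _ ⟨w₁, h₁, w₂, -, rfl⟩
    exact ⟨w₁, h₁, w₂, rfl⟩
  have hmem : ∀ w ∈ W₀, ∀ v : V₀, ι ℂ w * ι ℂ v ∈ wedgeWithAll W₀ := fun w hw v =>
    Submodule.subset_span ⟨w, hw, v, rfl⟩
  have hσK : ι ℂ a * ι ℂ b ∈ K := by
    have : ι ℂ a * ι ℂ b ∈ (wedge2 W₀ : Set (ExteriorAlgebra ℂ V₀)) :=
      Submodule.subset_span ⟨a, haW, b, hbW, rfl⟩
    rw [← hdec] at this
    exact this.1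
  obtain ⟨κ, hκK, hκ⟩ := Set.not_subset.1 hnc
  obtain ⟨x, y, α, β, γ, hκe⟩ := exists_expansion hspan (hK2 hκK)
  have hne : ¬(α = 0 ∧ β = 0 ∧ γ = 0) := by
    rintro ⟨rfl, rfl, rfl⟩
    apply hκ
    rw [hκe]
    simpa using add_mem (hmem a haW x) (hmem b hbW y)
  obtain ⟨f, u, v, hspan', huv⟩ := exists_factorization hspan hne
  obtain ⟨p, q, t, u', v', hspan'', hκn⟩ := exists_normal_form (x := x) (y := y) hspan'
  rw [huv, hκn] at hκe
  have hρ : ι ℂ (p • a + q • b) * ι ℂ f + ι ℂ u' * ι ℂ v' = κ - t • (ι ℂ a * ι ℂ b) := by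
    rw [hκe]; module
  have hρK : ι ℂ (p • a + q • b) * ι ℂ f + ι ℂ u' * ι ℂ v' ∈ K := by
    rw [hρ]; exact sub_mem hκK (K.smul_mem t hσK)
  have hρW : ι ℂ (p • a + q • b) * ι ℂ f + ι ℂ u' * ι ℂ v' ∉ wedgeWithAll W₀ := by
    intro hm
    apply hκ
    rw [hκe]
    exact add_mem (Submodule.smul_mem _ t (hmem a haW b)) hm
  -- Otherwise `u' ∧ v'` would be a decomposable element of `K` outside `W₀ ∧ V₀`.
  have hpq : ¬(p = 0 ∧ q = 0) := by
    rintro ⟨rfl, rfl⟩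
    simp only [zero_smul, add_zero, map_zero, zero_mul, zero_add] at hρK hρW
    refine hρW (hle ?_)
    rw [← SetLike.mem_coe, ← hdec]
    refine ⟨hρK, ?_⟩
    rw [mul_assoc, ← mul_assoc (ι ℂ v'), ι_swap u' v', neg_mul, mul_assoc, ι_mul_self, mul_zero,
      neg_zero, mul_zero]
  obtain ⟨w, hw, hspanw⟩ := exists_partner (a := a) (b := b) hpq
  have haw : a ∈ Submodule.span ℂ {p • a + q • b, w} := hspanw ▸ Submodule.subset_span (by simp)
  have hbw : b ∈ Submodule.span ℂ {p • a + q • b, w} := hspanw ▸ Submodule.subset_span (by simp)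
  have hsub : Submodule.span ℂ {p • a + q • b, w} ≤
      Submodule.span ℂ {p • a + q • b, w, f, u', v'} := Submodule.span_mono (by grind)
  have htop : Submodule.span ℂ {p • a + q • b, w, f, u', v'} = ⊤ :=
    span_top_of_mem hspan'' (hsub haw) (hsub hbw) (Submodule.subset_span (by simp))
      (Submodule.subset_span (by simp)) (Submodule.subset_span (by simp))
  refine ⟨p • a + q • b, w, f, u', v', ?_, htop, hW.trans hspanw.symm, ?_⟩
  · apply linearIndependent_of_top_le_span_of_card_eq_finrank
    · rw [← htop]
      apply Submodule.span_mono
      simp [Set.insert_subset_iff]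
    · simp [hdim]
  · rw [hw]
    have hli : LinearIndependent ℂ
        ![ι ℂ a * ι ℂ b, ι ℂ (p • a + q • b) * ι ℂ f + ι ℂ u' * ι ℂ v'] := by
      rw [LinearIndependent.pair_iff' (ι_mul_ne_zero hab)]
      rintro s hs
      exact hρW (hs ▸ Submodule.smul_mem _ s (hmem a haW b))
    have hfin := finrank_span_eq_card hli
    rw [Matrix.range_cons_cons_empty] at hfin
    have : FiniteDimensional ℂ K := Module.finite_of_finrank_eq_succ hKdim
    refine (Submodule.eq_of_le_of_finrank_eq ?_ ?_).symm
    · rw [Submodule.span_le]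
      rintro z (rfl | rfl) <;> assumption
    · rw [hfin, hKdim]; rfl
end

section
/- Every element z ∈ ℤ[√2] with norm N(z) = −1 (i.e. z = y + x√2 with y² − 2x² = −1) is of the form z = ε·(−1+√2)·(3+2√2)ⁿ for some sign ε ∈ {1,−1} and some integer n ∈ ℤ. -/
/-!
Multiplying an element `z` of norm `-1` by `1 + √2`, which also has norm `-1`, gives a solution of
the Pell equation `x² - 2y² = 1`. The fundamental solution of that equation is `3 + 2√2`, so the
product is `±(3 + 2√2)ⁿ`, and multiplying back by `-1 + √2 = (1 + √2)⁻¹` recovers `z`.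
-/

/-- The fundamental unit `3 + 2√2` of `ℤ[√2]`. -/
def fundUnit : (ℤ√2)ˣ where
  val := ⟨3, 2⟩
  inv := ⟨3, -2⟩
  val_inv := by decide
  inv_val := by decide

open Pell in
theorem isFundamental_three_two :
    IsFundamental (Solution₁.mk 3 2 (by norm_num) : Solution₁ 2) := by
  refine ⟨by simp, by simp, fun {b} hb => ?_⟩
  rw [Solution₁.x_mk]
  by_contra! h
  have hx : b.x = 2 := by omega
  have hp := b.prop
  rw [hx] at hp
  -- `4 - 2y² = 1` is impossible by parity
  omega

/-- The unit `fundUnit ^ n` and the `n`-th power of the Pell solution `(3, 2)`, formed in different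
groups, are the same element of `ℤ√2`. -/
theorem coe_zpow_three_two (n : ℤ) :
    (((Pell.Solution₁.mk 3 2 (by norm_num) : Pell.Solution₁ 2) ^ n : Pell.Solution₁ 2) : ℤ√2) =
      ((fundUnit ^ n : (ℤ√2)ˣ) : ℤ√2) := by
  have h : Unitary.toUnits (Pell.Solution₁.mk 3 2 (by norm_num) : Pell.Solution₁ 2) = fundUnit :=
    Units.ext (Pell.Solution₁.coe_mk 3 2 (by norm_num))
  rw [← h]
  exact congrArg Units.val (map_zpow (Unitary.toUnits (R := ℤ√2)) _ n)

/-- Every element of `ℤ[√2]` of norm `−1` is of the form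
`ε·(−1+√2)·(3+2√2)ⁿ` with `ε ∈ {1, −1}` and `n ∈ ℤ`. -/
theorem stmt_14 (z : ℤ√2) (hz : z.norm = -1) :
    ∃ (ε : ℤ√2) (n : ℤ), (ε = 1 ∨ ε = -1) ∧
      z = ε * (⟨-1, 1⟩ : ℤ√2) * ((fundUnit ^ n : (ℤ√2)ˣ) : ℤ√2) := by
  have hw : (z * ⟨1, 1⟩ : ℤ√2) ∈ unitary (ℤ√2) := by
    rw [← Zsqrtd.norm_eq_one_iff_mem_unitary, Zsqrtd.norm_mul, hz]
    rfl
  have hinv : (⟨1, 1⟩ : ℤ√2) * ⟨-1, 1⟩ = 1 := by decide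
  have hz' : z = ⟨-1, 1⟩ * (z * ⟨1, 1⟩) := by linear_combination -z * hinv
  obtain ⟨n, hn | hn⟩ := isFundamental_three_two.eq_zpow_or_neg_zpow ⟨_, hw⟩
  · refine ⟨1, n, Or.inl rfl, ?_⟩
    have h : z * ⟨1, 1⟩ = ((fundUnit ^ n : (ℤ√2)ˣ) : ℤ√2) :=
      (congrArg Subtype.val hn).trans (coe_zpow_three_two n)
    rw [← h, one_mul]
    exact hz'
  · refine ⟨-1, n, Or.inr rfl, ?_⟩
    have h : z * ⟨1, 1⟩ = -((fundUnit ^ n : (ℤ√2)ˣ) : ℤ√2) :=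
      (congrArg Subtype.val hn).trans (congrArg Neg.neg (coe_zpow_three_two n))
    rw [neg_one_mul, neg_mul, ← mul_neg, ← h]
    exact hz'
end

section
/- Define the symmetric ℤ-bilinear form b on ℤ[√2] by b(z,w) = −(z·w̄ + z̄·w). For n ∈ ℤ let α_n = −(3−2√2)ⁿ ∈ ℤ[√2]. Then b(α_n, −1+√2) > 0 if n > 0, and b(−α_n, −1+√2) > 0 if n ≤ 0. -/
/-!
For `z = y + x√2` one has `b(z, −1+√2) = 2(y + 2x)`. Nonnegative powers of `3 + 2√2` have
`y > 0` and `x ≥ 0`, which settles `n ≤ 0`. Nonnegative powers of `3 − 2√2` have `y > 0` and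
`x ≤ 0`, and multiplying such an element by `3 − 2√2` yields an element `y' + x'√2` with
`y' + 2x' = 2x − y < 0`, which settles `n > 0`.
-/

/-- The unit `3 − 2√2` of `ℤ[√2]` (inverse of `3 + 2√2`). -/
def unit32 : (ℤ√2)ˣ where
  val := ⟨3, -2⟩
  inv := ⟨3, 2⟩
  val_inv := by decide
  inv_val := by decide

/-- The symmetric ℤ-bilinear form `b(z,w) = −(z·w̄ + z̄·w)` on `ℤ[√2]`
(its value lies in `ℤ ⊆ ℤ[√2]`; we record its real part). -/
def bform (z w : ℤ√2) : ℤ := (-(z * star w + star z * w)).re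

/-- `α_n = −(3−2√2)ⁿ`. -/
def alphaN (n : ℤ) : ℤ√2 := -((unit32 ^ n : (ℤ√2)ˣ) : ℤ√2)

theorem bform_neg_one_one (z : ℤ√2) : bform z ⟨-1, 1⟩ = 2 * (z.re + 2 * z.im) := by
  simp [bform]
  ring

theorem unit32_pow_signs (k : ℕ) :
    0 < ((unit32 ^ k : (ℤ√2)ˣ) : ℤ√2).re ∧ ((unit32 ^ k : (ℤ√2)ˣ) : ℤ√2).im ≤ 0 := by
  induction k with
  | zero => simp
  | succ k ih =>
    rw [pow_succ, Units.val_mul, Zsqrtd.re_mul, Zsqrtd.im_mul]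
    have hre : (unit32 : ℤ√2).re = 3 := rfl
    have him : (unit32 : ℤ√2).im = -2 := rfl
    rw [hre, him]
    omega

theorem unit32_inv_pow_signs (k : ℕ) :
    0 < ((unit32⁻¹ ^ k : (ℤ√2)ˣ) : ℤ√2).re ∧ 0 ≤ ((unit32⁻¹ ^ k : (ℤ√2)ˣ) : ℤ√2).im := by
  induction k with
  | zero => simp
  | succ k ih =>
    have hre : ((unit32⁻¹ : (ℤ√2)ˣ) : ℤ√2).re = 3 := rfl
    have him : ((unit32⁻¹ : (ℤ√2)ˣ) : ℤ√2).im = 2 := rfl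
    rw [pow_succ, Units.val_mul, Zsqrtd.re_mul, Zsqrtd.im_mul, hre, him]
    omega

/-- `b(α_n, −1+√2) > 0` if `n > 0`, and `b(−α_n, −1+√2) > 0` if `n ≤ 0`. -/
theorem stmt_15 (n : ℤ) :
    (0 < n → 0 < bform (alphaN n) ⟨-1, 1⟩) ∧
      (n ≤ 0 → 0 < bform (-alphaN n) ⟨-1, 1⟩) := by
  rw [bform_neg_one_one, bform_neg_one_one]
  simp only [alphaN, neg_neg, Zsqrtd.re_neg, Zsqrtd.im_neg]
  constructor
  · intro hn
    obtain ⟨k, rfl⟩ : ∃ k : ℕ, n = ((k + 1 : ℕ) : ℤ) := ⟨(n - 1).toNat, by omega⟩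
    have hk := unit32_pow_signs k
    have hre : (unit32 : ℤ√2).re = 3 := rfl
    have him : (unit32 : ℤ√2).im = -2 := rfl
    rw [zpow_natCast, pow_succ, Units.val_mul, Zsqrtd.re_mul, Zsqrtd.im_mul, hre, him]
    omega
  · intro hn
    obtain ⟨k, rfl⟩ : ∃ k : ℕ, n = -(k : ℤ) := ⟨(-n).toNat, by omega⟩
    have hk := unit32_inv_pow_signs k
    rw [zpow_neg, zpow_natCast, ← inv_pow]
    omega
end

section
/- Define the symmetric ℤ-bilinear form b on ℤ[√2] by b(z,w) = −(z·w̄ + z̄·w), and for n ∈ ℤ let h_n = (−1+√2)·(3+2√2)ⁿ. Then: if n > 0, the element β = 2·(3−2√2)^{−n+1} satisfies b(h_n, β) = −4 and b(β, −1+√2) > 0; if n < 0, the element β = −2·(3−2√2)^{−n} satisfies b(h_n, β) = −4 and b(β, −1+√2) > 0. In particular, for every nonzero n ∈ ℤ there exists β ∈ ℤ[√2] of the form ±2·(3−2√2)^k (k ∈ ℤ) with b(β, −1+√2) > 0 and b(h_n, β) < 0. -/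
/-- `h_n = (−1+√2)·(3+2√2)ⁿ`. -/
def hN (n : ℤ) : ℤ√2 := (⟨-1, 1⟩ : ℤ√2) * ((fundUnit ^ n : (ℤ√2)ˣ) : ℤ√2)

theorem unit32_zpow_neg (k : ℤ) : unit32 ^ (-k) = fundUnit ^ k := by
  have h : unit32 = fundUnit⁻¹ := rfl
  rw [h, inv_zpow', neg_neg]

/-- The powers of `3 + 2√2` have norm `1`. -/
theorem norm_fundUnit_zpow (k : ℤ) :
    ((fundUnit ^ k : (ℤ√2)ˣ) : ℤ√2).re ^ 2 - 2 * ((fundUnit ^ k : (ℤ√2)ˣ) : ℤ√2).im ^ 2 = 1 := by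
  have h1 : Units.map (Zsqrtd.normMonoidHom (d := 2)) fundUnit = 1 := by
    ext
    rfl
  have h2 : Units.map (Zsqrtd.normMonoidHom (d := 2)) (fundUnit ^ k) = 1 := by
    rw [map_zpow, h1, one_zpow]
  have h3 : Zsqrtd.norm ((fundUnit ^ k : (ℤ√2)ˣ) : ℤ√2) = 1 := congrArg Units.val h2
  rw [Zsqrtd.norm_def] at h3
  linarith

theorem bform_eq (z w : ℤ√2) : bform z w = -2 * (z.re * w.re - 2 * z.im * w.im) := by
  simp [bform]
  ring

theorem fundUnit_pow_succ_coords (m : ℕ) :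
    ((fundUnit ^ (m + 1) : (ℤ√2)ˣ) : ℤ√2).re =
      3 * ((fundUnit ^ m : (ℤ√2)ˣ) : ℤ√2).re + 4 * ((fundUnit ^ m : (ℤ√2)ˣ) : ℤ√2).im ∧
    ((fundUnit ^ (m + 1) : (ℤ√2)ˣ) : ℤ√2).im =
      2 * ((fundUnit ^ m : (ℤ√2)ˣ) : ℤ√2).re + 3 * ((fundUnit ^ m : (ℤ√2)ˣ) : ℤ√2).im := by
  have h : (fundUnit : ℤ√2) = ⟨3, 2⟩ := rfl
  rw [pow_succ, Units.val_mul, h, Zsqrtd.re_mul, Zsqrtd.im_mul]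
  constructor <;> ring

theorem fundUnit_pow_pos (m : ℕ) :
    0 < ((fundUnit ^ m : (ℤ√2)ˣ) : ℤ√2).re ∧ 0 ≤ ((fundUnit ^ m : (ℤ√2)ˣ) : ℤ√2).im := by
  induction m with
  | zero => simp
  | succ m ih =>
    obtain ⟨h1, h2⟩ := fundUnit_pow_succ_coords m
    omega

theorem fundUnit_pow_succ_lt (m : ℕ) :
    ((fundUnit ^ (m + 1) : (ℤ√2)ˣ) : ℤ√2).re < 2 * ((fundUnit ^ (m + 1) : (ℤ√2)ˣ) : ℤ√2).im := by
  obtain ⟨h1, h2⟩ := fundUnit_pow_succ_coords m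
  have := fundUnit_pow_pos m
  omega

/-- Inverting a power of `3 + 2√2` is conjugation. -/
theorem fundUnit_pow_inv (m : ℕ) :
    (((fundUnit ^ m)⁻¹ : (ℤ√2)ˣ) : ℤ√2) = star ((fundUnit ^ m : (ℤ√2)ˣ) : ℤ√2) := by
  have h : ((fundUnit⁻¹ : (ℤ√2)ˣ) : ℤ√2) = star (fundUnit : ℤ√2) := rfl
  rw [← inv_pow, Units.val_pow_eq_pow_val, h, Units.val_pow_eq_pow_val, star_pow]

theorem case_pos (n : ℤ) (hn : 0 < n) :
    bform (hN n) (2 * ((unit32 ^ (-n + 1) : (ℤ√2)ˣ) : ℤ√2)) = -4 ∧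
    0 < bform (2 * ((unit32 ^ (-n + 1) : (ℤ√2)ˣ) : ℤ√2)) ⟨-1, 1⟩ := by
  obtain ⟨m, rfl⟩ : ∃ m : ℕ, n = m + 1 := ⟨(n - 1).toNat, by omega⟩
  have e : -((m : ℤ) + 1) + 1 = -(m : ℤ) := by ring
  have hnorm := norm_fundUnit_zpow m
  obtain ⟨h1, h2⟩ := fundUnit_pow_succ_coords m
  obtain ⟨p1, p2⟩ := fundUnit_pow_pos m
  have e2 : fundUnit ^ ((m : ℤ) + 1) = fundUnit ^ (m + 1) := by
    exact_mod_cast zpow_natCast fundUnit (m + 1)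
  rw [e, unit32_zpow_neg, hN, e2]
  rw [zpow_natCast] at hnorm ⊢
  simp only [bform_eq, Zsqrtd.re_mul, Zsqrtd.im_mul, h1, h2, Zsqrtd.re_ofNat, Zsqrtd.im_ofNat, Nat.cast_ofNat]
  constructor
  · linear_combination (-4) * hnorm
  · linarith

theorem case_neg (n : ℤ) (hn : n < 0) :
    bform (hN n) (-(2 * ((unit32 ^ (-n) : (ℤ√2)ˣ) : ℤ√2))) = -4 ∧
    0 < bform (-(2 * ((unit32 ^ (-n) : (ℤ√2)ˣ) : ℤ√2))) ⟨-1, 1⟩ := by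
  have hnorm := norm_fundUnit_zpow n
  rw [unit32_zpow_neg, hN]
  simp only [bform_eq, Zsqrtd.re_mul, Zsqrtd.im_mul, Zsqrtd.re_neg, Zsqrtd.im_neg,
    Zsqrtd.re_ofNat, Zsqrtd.im_ofNat, Nat.cast_ofNat]
  constructor
  · linear_combination (-4) * hnorm
  · obtain ⟨m, rfl⟩ : ∃ m : ℕ, n = -((m + 1 : ℕ) : ℤ) := ⟨(-n - 1).toNat, by omega⟩
    have h := fundUnit_pow_succ_lt m
    rw [zpow_neg, zpow_natCast, fundUnit_pow_inv, Zsqrtd.re_star, Zsqrtd.im_star]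
    linarith

/-- For `n > 0` the element `β = 2·(3−2√2)^(−n+1)` satisfies
`b(h_n, β) = −4` and `b(β, −1+√2) > 0`; for `n < 0` the element `β = −2·(3−2√2)^(−n)`
satisfies the same; in particular for every nonzero `n` there is `β = ±2·(3−2√2)^k`
with `b(β, −1+√2) > 0` and `b(h_n, β) < 0`. -/
theorem stmt_16 (n : ℤ) :
    (0 < n →
      bform (hN n) (2 * ((unit32 ^ (-n + 1) : (ℤ√2)ˣ) : ℤ√2)) = -4 ∧
      0 < bform (2 * ((unit32 ^ (-n + 1) : (ℤ√2)ˣ) : ℤ√2)) ⟨-1, 1⟩) ∧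
    (n < 0 →
      bform (hN n) (-(2 * ((unit32 ^ (-n) : (ℤ√2)ˣ) : ℤ√2))) = -4 ∧
      0 < bform (-(2 * ((unit32 ^ (-n) : (ℤ√2)ˣ) : ℤ√2))) ⟨-1, 1⟩) ∧
    (n ≠ 0 → ∃ (ε : ℤ√2) (k : ℤ), (ε = 1 ∨ ε = -1) ∧
      0 < bform (ε * (2 * ((unit32 ^ k : (ℤ√2)ˣ) : ℤ√2))) ⟨-1, 1⟩ ∧
      bform (hN n) (ε * (2 * ((unit32 ^ k : (ℤ√2)ˣ) : ℤ√2))) < 0) := by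
  refine ⟨case_pos n, case_neg n, fun hn => ?_⟩
  rcases lt_or_gt_of_ne hn with h | h
  · obtain ⟨h1, h2⟩ := case_neg n h
    refine ⟨-1, -n, Or.inr rfl, ?_, ?_⟩
    · rwa [neg_one_mul]
    · rw [neg_one_mul, h1]
      norm_num
  · obtain ⟨h1, h2⟩ := case_pos n h
    refine ⟨1, -n + 1, Or.inl rfl, ?_, ?_⟩
    · rwa [one_mul]
    · rw [one_mul, h1]
      norm_num
end
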